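/- arXiv:1909.00272 — 5 statements merged into one kernel-verified Lean document; each statement's English description precedes it below -/
import Mathlib

section
/- Let n ≥ 1 and let G be a subgroup of GL(n, ℂ) such that there exists a natural number r with the property that every element of G has order at most r (equivalently, g^(r!) = 1 for all g ∈ G). Then G is finite. -/
open Matrix

/-!
Choose finitely many elements `t` of `G` spanning the same space of matrices as `G`. Each trace
`tr (g t)` is a sum of `n` roots of unity of bounded order, hence takes finitely many values, so it
suffices that `g` is determined by these traces. If `g` and `h` have the same traces, then
`tr (g x) = tr (h x)` for all `x ∈ G`, and `u = g h⁻¹` satisfies `tr (u ^ (j + 1)) = tr (u ^ j)`,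
so every power of `u` has trace `n`. The average of the powers of `u` is then an idempotent of
trace `n`; in characteristic zero it is the identity, and as `u` fixes it, `u = 1`.
-/

section GeomSum

variable {R : Type*} [Ring R] {a : R} {N : ℕ}

lemma geom_sum_mul_pow_of_pow_eq_one (ha : a ^ N = 1) (j : ℕ) :
    (∑ i ∈ Finset.range N, a ^ i) * a ^ j = ∑ i ∈ Finset.range N, a ^ i := by
  have hmul : (∑ i ∈ Finset.range N, a ^ i) * a = ∑ i ∈ Finset.range N, a ^ i := by
    rw [← sub_eq_zero, ← mul_sub_one, geom_sum_mul, ha, sub_self]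
  induction j with
  | zero => rw [pow_zero, mul_one]
  | succ j ih => rw [pow_succ, ← mul_assoc, ih, hmul]

lemma geom_sum_mul_self_of_pow_eq_one (ha : a ^ N = 1) :
    (∑ i ∈ Finset.range N, a ^ i) * ∑ i ∈ Finset.range N, a ^ i =
      N • ∑ i ∈ Finset.range N, a ^ i := by
  rw [Finset.mul_sum, Finset.sum_congr rfl fun j _ ↦ geom_sum_mul_pow_of_pow_eq_one ha j,
    Finset.sum_const, Finset.card_range]

end GeomSum

lemma finite_of_forall_mapsTo_of_eqOn_imp_eq {α R M M' : Type*} [Semiring R]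
    [AddCommMonoid M] [Module R M] [IsNoetherian R M] [AddCommMonoid M'] [Module R M']
    (f : α → M →ₗ[R] M') {T : Set M} {V : Set M'} (hV : V.Finite)
    (hfV : ∀ a, Set.MapsTo (f a) T V) (hf : ∀ a b, Set.EqOn (f a) (f b) T → a = b) :
    Finite α := by
  obtain ⟨S, hST, hspan⟩ := (Submodule.fg_span_iff_fg_span_finset_subset T).1
    (IsNoetherian.noetherian (Submodule.span R T))
  have : Finite V := hV
  let restrict (a : α) (s : S) : V := ⟨f a s, hfV a (hST s.2)⟩
  refine Finite.of_injective restrict fun a b hab ↦ hf a b fun t ht ↦ ?_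
  have hS : Set.EqOn (f a) (f b) S := fun s hs ↦ congrArg Subtype.val (congrFun hab ⟨s, hs⟩)
  exact LinearMap.eqOn_span hS (hspan ▸ Submodule.subset_span ht)

section Trace

open Polynomial

variable {ι K : Type*} [Fintype ι] [DecidableEq ι] [Field K]

lemma mem_roots_of_mem_roots_charpoly {A : Matrix ι ι K} {p : K[X]} (hp : p ≠ 0)
    (hA : aeval A p = 0) {z : K} (hz : z ∈ A.charpoly.roots) : z ∈ p.roots := by
  have hspec : z ∈ spectrum K A :=
    mem_spectrum_iff_isRoot_charpoly.2 (isRoot_of_mem_roots hz)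
  have heval : p.eval z ∈ spectrum K (aeval A p) :=
    spectrum.subset_polynomial_aeval A p ⟨z, hspec, rfl⟩
  rw [hA, spectrum.mem_iff, sub_zero] at heval
  rw [mem_roots hp, IsRoot.def]
  by_contra hne
  exact heval ((IsUnit.mk0 _ hne).map (algebraMap K (Matrix ι ι K)))

lemma finite_trace_image_setOf_aeval_eq_zero_of_isAlgClosed [IsAlgClosed K] {p : K[X]}
    (hp : p ≠ 0) :
    (trace '' {A : Matrix ι ι K | aeval A p = 0}).Finite := by
  classical
  refine ((p.roots.toFinset.sym (Fintype.card ι)).image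
    fun s : Sym K (Fintype.card ι) ↦ s.1.sum).finite_toSet.subset ?_
  rintro _ ⟨A, hA, rfl⟩
  have hcard : A.charpoly.roots.card = Fintype.card ι := by
    rw [← (IsAlgClosed.splits A.charpoly).natDegree_eq_card_roots, charpoly_natDegree_eq_dim]
  let eigenvalues : Sym K (Fintype.card ι) := Sym.mk A.charpoly.roots hcard
  have hmem : eigenvalues ∈ p.roots.toFinset.sym (Fintype.card ι) :=
    Finset.mem_sym_iff.2 fun z hz ↦
      Multiset.mem_toFinset.2 (mem_roots_of_mem_roots_charpoly hp hA hz)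
  exact Finset.mem_coe.2
    (Finset.mem_image.2 ⟨eigenvalues, hmem, (trace_eq_sum_roots_charpoly A).symm⟩)

lemma finite_trace_image_setOf_aeval_eq_zero {p : K[X]} (hp : p ≠ 0) :
    (trace '' {A : Matrix ι ι K | aeval A p = 0}).Finite := by
  let L := AlgebraicClosure K
  have hpL : p.map (algebraMap K L) ≠ 0 := Polynomial.map_ne_zero hp
  refine ((finite_trace_image_setOf_aeval_eq_zero_of_isAlgClosed (ι := ι) hpL).preimage
    (algebraMap K L).injective.injOn).subset ?_
  rintro _ ⟨A, hA, rfl⟩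
  refine ⟨(Algebra.ofId K L).mapMatrix A, ?_, (AddMonoidHom.map_trace (algebraMap K L) A).symm⟩
  rw [Set.mem_ofPred_eq, aeval_map_algebraMap, aeval_algHom_apply, hA, map_zero]

lemma finite_trace_image_setOf_pow_eq_one {N : ℕ} (hN : N ≠ 0) :
    (trace '' {A : Matrix ι ι K | A ^ N = 1}).Finite := by
  have hp : (X ^ N - 1 : K[X]) ≠ 0 := (monic_X_pow_sub_C 1 hN).ne_zero
  simpa [sub_eq_zero] using finite_trace_image_setOf_aeval_eq_zero (ι := ι) hp

variable [CharZero K]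

lemma eq_one_of_isIdempotentElem_of_trace_eq_card {E : Matrix ι ι K} (hE : IsIdempotentElem E)
    (htr : E.trace = Fintype.card ι) : E = 1 := by
  have hF : IsIdempotentElem (toLin' (1 - E)) := hE.one_sub.map toLinAlgEquiv'
  have hzero : toLin' (1 - E) = 0 := by
    refine LinearMap.IsIdempotentElem.eq_zero_of_trace_eq_zero hF ?_
    rw [trace_toLin'_eq, trace_sub, trace_one, htr, sub_self]
  exact (sub_eq_zero.1 (toLin'.map_eq_zero_iff.1 hzero)).symm

lemma eq_one_of_pow_eq_one_of_forall_trace_pow_eq_card {A : Matrix ι ι K} {N : ℕ} (hN : N ≠ 0)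
    (hA : A ^ N = 1) (htr : ∀ j, (A ^ j).trace = Fintype.card ι) : A = 1 := by
  have hNK : (N : K) ≠ 0 := Nat.cast_ne_zero.2 hN
  let E : Matrix ι ι K := (N : K)⁻¹ • ∑ i ∈ Finset.range N, A ^ i
  have hidem : IsIdempotentElem E := by
    rw [IsIdempotentElem, smul_mul_smul_comm, geom_sum_mul_self_of_pow_eq_one hA,
      ← Nat.cast_smul_eq_nsmul K, smul_smul, inv_mul_cancel_right₀ hNK]
  have htrE : E.trace = Fintype.card ι := by
    simp [E, trace_sum, htr, hNK]
  have hE : E = 1 := eq_one_of_isIdempotentElem_of_trace_eq_card hidem htrE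
  calc
    A = E * A ^ 1 := by rw [hE, one_mul, pow_one]
    _ = E := by rw [smul_mul_assoc, geom_sum_mul_pow_of_pow_eq_one hA]
    _ = 1 := hE

lemma eq_of_pow_eq_one_of_trace_mul_eq {G : Subgroup (GL ι K)} {N : ℕ} (hN : N ≠ 0)
    {g h : GL ι K} (hg : g ∈ G) (hh : h ∈ G) (hpow : (g * h⁻¹) ^ N = 1)
    (htr : ∀ x ∈ G, (g * x : Matrix ι ι K).trace = (h * x : Matrix ι ι K).trace) : g = h := by
  have hu : g * h⁻¹ ∈ G := G.mul_mem hg (G.inv_mem hh)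
  have htr_pow (j : ℕ) : (((g * h⁻¹) ^ j : GL ι K) : Matrix ι ι K).trace = Fintype.card ι := by
    induction j with
    | zero => simp
    | succ j ih =>
      have hx : h⁻¹ * (g * h⁻¹) ^ j ∈ G := G.mul_mem (G.inv_mem hh) (G.pow_mem hu j)
      rw [← ih, pow_succ', mul_assoc, Units.val_mul, htr _ hx, ← Units.val_mul,
        mul_inv_cancel_left]
  refine mul_inv_eq_one.1 (Units.ext ?_)
  refine eq_one_of_pow_eq_one_of_forall_trace_pow_eq_card hN ?_ fun j ↦ ?_
  · rw [← Units.val_pow_eq_pow_val, hpow, Units.val_one]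
  · rw [← Units.val_pow_eq_pow_val, htr_pow]

end Trace

theorem burnside_theorem_general {ι K : Type*} [Fintype ι] [DecidableEq ι] [Field K] [CharZero K]
    (G : Subgroup (GL ι K)) {N : ℕ} (hN : N ≠ 0) (hG : ∀ g ∈ G, g ^ N = 1) : Finite G := by
  let tracePairing (g : G) : Matrix ι ι K →ₗ[K] K :=
    traceLinearMap ι K K ∘ₗ LinearMap.mulLeft K g.1.val
  refine finite_of_forall_mapsTo_of_eqOn_imp_eq tracePairing (T := Units.val '' (G : Set _))
    (finite_trace_image_setOf_pow_eq_one (ι := ι) hN) ?_ ?_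
  · rintro g _ ⟨x, hx, rfl⟩
    have hpow : (g * x : GL ι K) ^ N = 1 := hG _ (G.mul_mem g.2 hx)
    exact ⟨(g * x : GL ι K), congrArg Units.val hpow, rfl⟩
  · intro g h hgh
    have hpow : (g * h⁻¹ : GL ι K) ^ N = 1 := hG _ (G.mul_mem g.2 (G.inv_mem h.2))
    exact Subtype.ext <|
      eq_of_pow_eq_one_of_trace_mul_eq hN g.2 h.2 hpow fun x hx ↦ hgh ⟨x, hx, rfl⟩

/-- **Burnside's theorem.** A subgroup of `GL(n, ℂ)` of bounded exponent (every
element has order at most `r`, equivalently `g ^ r! = 1` for all `g`) is finite. -/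
theorem burnside_theorem {n : ℕ} (hn : 1 ≤ n) (G : Subgroup (GL (Fin n) ℂ))
    (r : ℕ) (hexp : ∀ g ∈ G, g ^ Nat.factorial r = 1) :
    Finite G :=
  burnside_theorem_general G r.factorial_ne_zero hexp
end

section
/- Let d ≥ 1 and let f : ℝ^d → ℝ^d be a map with f(0) = 0 which is continuously differentiable on an open neighborhood of 0, whose derivative at 0 is the identity linear map. Suppose there exist an integer n ≥ 1 and an open neighborhood V of 0 such that the n-th iterate f^[n] equals the identity on V. Then there exists an open neighborhood W of 0 on which f equals the identity. -/
/-!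
The sum of iterates `S = id + f + ⋯ + f^[n - 1]` satisfies `S ∘ f = S` near the fixed point, since
`f^[n] = id` there. As `f` has derivative `id`, `S` has the invertible strict derivative `n • id`,
so `S` is injective near the fixed point and `S (f y) = S y` forces `f y = y`.
-/

open Filter Topology Function

theorem birkhoffSum_apply_eq_of_isPeriodicPt {α G : Type*} [AddCommGroup G] {f : α → α} {n : ℕ}
    {x : α} (hx : IsPeriodicPt f n x) (g : α → G) :
    birkhoffSum f g n (f x) = birkhoffSum f g n x := by
  rw [← sub_eq_zero, birkhoffSum_apply_sub_birkhoffSum, hx.eq, sub_self]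

section

variable {𝕜 E F : Type*} [NontriviallyNormedField 𝕜]
  [NormedAddCommGroup E] [NormedSpace 𝕜 E] [NormedAddCommGroup F] [NormedSpace 𝕜 F]

theorem hasStrictFDerivAt_birkhoffSum {f : E → E} {f' : E →L[𝕜] E} {g : E → F} {g' : E →L[𝕜] F}
    {a : E} (hf : HasStrictFDerivAt f f' a) (hfa : IsFixedPt f a) (hg : HasStrictFDerivAt g g' a)
    (n : ℕ) :
    HasStrictFDerivAt (birkhoffSum f g n) (∑ k ∈ Finset.range n, g' ∘L f' ^ k) a := by
  refine HasStrictFDerivAt.fun_sum fun k _ ↦ ?_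
  have hg_iter : HasStrictFDerivAt g g' (f^[k] a) := by rwa [(hfa.iterate k).eq]
  exact hg_iter.comp a (hf.iterate hfa k)

theorem eventually_eq_of_hasStrictFDerivAt_of_isInducing {f : E → F} {f' : E →L[𝕜] F} {a : E}
    (hf : HasStrictFDerivAt f f' a) (hf' : IsInducing f') :
    ∀ᶠ p : E × E in 𝓝 (a, a), f p.1 = f p.2 → p.1 = p.2 := by
  simpa only [sub_eq_zero] using (hf.isTheta_sub hf').isBigO_symm.eq_zero_imp

theorem reeb_stability_general {f : E → E} {a : E} {n : ℕ} (hn : (n : 𝕜) ≠ 0)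
    (hfa : IsFixedPt f a) (hf : HasStrictFDerivAt f (ContinuousLinearMap.id 𝕜 E) a)
    (hiter : ∀ᶠ y in 𝓝 a, IsPeriodicPt f n y) :
    ∀ᶠ y in 𝓝 a, IsFixedPt f y := by
  have hS : HasStrictFDerivAt (birkhoffSum f id n) ((n : 𝕜) • ContinuousLinearMap.id 𝕜 E) a := by
    convert hasStrictFDerivAt_birkhoffSum hf hfa (hasStrictFDerivAt_id a) n using 1
    simp only [← ContinuousLinearMap.one_def, ← ContinuousLinearMap.mul_def, one_pow, mul_one,
      Finset.sum_const, Finset.card_range, Nat.cast_smul_eq_nsmul]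
  have hinducing : IsInducing ((n : 𝕜) • ContinuousLinearMap.id 𝕜 E) :=
    (Homeomorph.smulOfNeZero (n : 𝕜) hn).isInducing
  have htendsto : Tendsto (fun y ↦ (f y, y)) (𝓝 a) (𝓝 (a, a)) := by
    simpa only [hfa.eq, id] using (hf.continuousAt.prodMk continuousAt_id).tendsto
  filter_upwards [htendsto.eventually
    (eventually_eq_of_hasStrictFDerivAt_of_isInducing hS hinducing), hiter] with y hinj hy
  exact hinj (birkhoffSum_apply_eq_of_isPeriodicPt hy id)

end

/-- **Reeb stability (weak form).** If `f : ℝᵈ → ℝᵈ` fixes `0`, is `C¹` on a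
neighborhood of `0`, has derivative the identity at `0`, and some iterate
`f^[n]` (`n ≥ 1`) is the identity near `0`, then `f` itself is the identity on a
neighborhood of `0`. -/
theorem reeb_stability {d : ℕ} (hd : 1 ≤ d)
    (f : EuclideanSpace ℝ (Fin d) → EuclideanSpace ℝ (Fin d))
    (hf0 : f 0 = 0)
    (U : Set (EuclideanSpace ℝ (Fin d))) (hUopen : IsOpen U) (hU0 : 0 ∈ U)
    (hC1 : ContDiffOn ℝ 1 f U)
    (hderiv : fderiv ℝ f 0 = ContinuousLinearMap.id ℝ (EuclideanSpace ℝ (Fin d)))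
    (n : ℕ) (hn : 1 ≤ n)
    (V : Set (EuclideanSpace ℝ (Fin d))) (hVopen : IsOpen V) (hV0 : 0 ∈ V)
    (hiter : ∀ y ∈ V, f^[n] y = y) :
    ∃ W : Set (EuclideanSpace ℝ (Fin d)), IsOpen W ∧ 0 ∈ W ∧ ∀ y ∈ W, f y = y := by
  have hf : HasStrictFDerivAt f (ContinuousLinearMap.id ℝ (EuclideanSpace ℝ (Fin d))) 0 :=
    hderiv ▸ (hC1.contDiffAt (hUopen.mem_nhds hU0)).hasStrictFDerivAt one_ne_zero
  obtain ⟨W, hWf, hW, hW0⟩ := eventually_nhds_iff.mp <| reeb_stability_general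
    (Nat.cast_ne_zero.mpr (by lia)) hf0 hf (eventually_of_mem (hVopen.mem_nhds hV0) hiter)
  exact ⟨W, hW, hW0, hWf⟩
end

section
/- Let G be an infinite group in which every element has order a power of 2 (i.e., for each g ∈ G there exists k with g^(2^k) = 1). Then there exists an element g ∈ G of order exactly 2 whose centralizer C(g) = {h ∈ G : h*g = g*h} is infinite. -/
/-!
Two involutions `i ≠ j` both invert `i * j`, so an involution among the powers of `i * j`, which
exists in a 2-group, commutes with both of them. Hence, if all involutions commuting with `i` had
finite centralizers, the conjugacy class of `i` would lie in a finite union of finite centralizers.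
By the orbit-stabilizer theorem the group would then be finite.
-/

section

variable {G : Type*} [Group G] {i j : G}

theorem finite_of_finite_conjugatesOf_of_finite_centralizer {g : G}
    (hconj : (conjugatesOf g).Finite) (hcent : {h : G | h * g = g * h}.Finite) : Finite G := by
  have horbit : Finite (MulAction.orbit (ConjAct G) g) :=
    hconj.subset fun _ hx ↦ (ConjAct.mem_orbit_conjAct.mp hx).symm
  have hstab : Finite (MulAction.stabilizer (ConjAct G) g) :=
    hcent.subset fun _ hx ↦ mul_inv_eq_iff_eq_mul.mp hx
  exact .of_equiv _ (MulAction.orbitProdStabilizerEquivGroup (ConjAct G) g)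

theorem orderOf_eq_of_isConj (h : IsConj i j) : orderOf i = orderOf j := by
  obtain ⟨c, rfl⟩ := isConj_iff.mp h
  exact (MulEquiv.orderOf_eq (MulAut.conj c) i).symm

theorem commute_pow_of_semiconjBy_inv {a x : G} (h : SemiconjBy a x x⁻¹) {n : ℕ}
    (hn : (x ^ n)⁻¹ = x ^ n) : Commute a (x ^ n) := by
  have hpow : SemiconjBy a (x ^ n) (x⁻¹ ^ n) := h.pow_right n
  rwa [inv_pow, hn] at hpow

theorem semiconjBy_mul_inv_left (hi : i⁻¹ = i) (hj : j⁻¹ = j) :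
    SemiconjBy i (i * j) (i * j)⁻¹ := by
  rw [SemiconjBy, mul_inv_rev, inv_mul_cancel_right, hj]
  exact mul_eq_of_eq_inv_mul (by rw [hi])

theorem semiconjBy_mul_inv_right (hi : i⁻¹ = i) (hj : j⁻¹ = j) :
    SemiconjBy j (i * j) (i * j)⁻¹ := by
  rw [SemiconjBy, mul_inv_rev, hi, hj, mul_assoc]

theorem exists_orderOf_eq_two_commute_commute (hi : orderOf i = 2) (hj : orderOf j = 2)
    (hij : j ≠ i → ∃ n : ℕ, orderOf ((i * j) ^ n) = 2) :
    ∃ z : G, orderOf z = 2 ∧ Commute i z ∧ Commute j z := by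
  obtain rfl | hne := eq_or_ne j i
  · exact ⟨j, hj, .refl j, .refl j⟩
  · obtain ⟨n, hn⟩ := hij hne
    have hi_inv := inv_eq_self_of_orderOf_eq_two hi
    have hj_inv := inv_eq_self_of_orderOf_eq_two hj
    have hn_inv := inv_eq_self_of_orderOf_eq_two hn
    exact ⟨(i * j) ^ n, hn,
      commute_pow_of_semiconjBy_inv (semiconjBy_mul_inv_left hi_inv hj_inv) hn_inv,
      commute_pow_of_semiconjBy_inv (semiconjBy_mul_inv_right hi_inv hj_inv) hn_inv⟩

theorem infinite_two_group_exists_involution_infinite_centralizer_general [Infinite G]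
    (hi : orderOf i = 2) (hmul : ∀ j, IsConj i j → j ≠ i → ∃ n : ℕ, orderOf ((i * j) ^ n) = 2) :
    ∃ z : G, orderOf z = 2 ∧ Commute i z ∧ {h : G | h * z = z * h}.Infinite := by
  by_contra! hfin
  have hcent : {h : G | h * i = i * h}.Finite := hfin i hi (.refl i)
  have hinv : {z : G | orderOf z = 2 ∧ Commute i z}.Finite :=
    hcent.subset fun z hz ↦ hz.2.symm
  have hconj : (conjugatesOf i).Finite := by
    refine (hinv.biUnion fun z hz ↦ hfin z hz.1 hz.2).subset fun j hj ↦ ?_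
    obtain ⟨z, hz, hiz, hjz⟩ :=
      exists_orderOf_eq_two_commute_commute hi ((orderOf_eq_of_isConj hj).symm.trans hi)
        (hmul j hj)
    exact Set.mem_biUnion ⟨hz, hiz⟩ hjz
  have : Finite G := finite_of_finite_conjugatesOf_of_finite_centralizer hconj hcent
  exact not_finite G

theorem exists_orderOf_pow_eq_of_isPGroup {p : ℕ} [Fact p.Prime] (hG : IsPGroup p G) {g : G}
    (hg : g ≠ 1) : ∃ n : ℕ, orderOf (g ^ n) = p :=
  ⟨_, orderOf_pow_orderOf_div (hG.isOfFinOrder (Fact.out : p.Prime).ne_zero g).orderOf_pos.ne'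
    (hG.dvd_orderOf hg)⟩

end

/-- **Proposition 2.2.** An infinite 2-group (every element has order a power of 2)
contains an involution whose centralizer is infinite. -/
theorem infinite_two_group_exists_involution_infinite_centralizer
    {G : Type*} [Group G] [Infinite G]
    (h2 : ∀ g : G, ∃ k : ℕ, g ^ 2 ^ k = 1) :
    ∃ g : G, orderOf g = 2 ∧ {h : G | h * g = g * h}.Infinite := by
  have hG : IsPGroup 2 G := isPGroup_iff_pow_pow_eq_one.mpr h2
  obtain ⟨g, hg⟩ := exists_ne (1 : G)
  obtain ⟨n, hi⟩ := exists_orderOf_pow_eq_of_isPGroup hG hg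
  have hmul (j : G) (hj : j ≠ g ^ n) : g ^ n * j ≠ 1 := fun h ↦
    hj ((eq_inv_of_mul_eq_one_right h).trans (inv_eq_self_of_orderOf_eq_two hi))
  obtain ⟨z, hz, -, hcent⟩ := infinite_two_group_exists_involution_infinite_centralizer_general hi
    fun j _ hj ↦ exists_orderOf_pow_eq_of_isPGroup hG (hmul j hj)
  exact ⟨z, hz, hcent⟩
end

section
/- Let p be a prime and let M be a nonempty compact topological manifold. Then there exists a natural number k such that there is no free action of the group (ℤ/pℤ)^k on M by homeomorphisms; that is, there is no group homomorphism ρ from (ℤ/pℤ)^k to the group of self-homeomorphisms of M with the property that ρ(g)(x) ≠ x for every g ≠ 0 and every x ∈ M. -/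
/-
Chains are spanned by finite lists of points of `M`, filtered by diameter. Since `M` is compact and
locally contractible, the cycles of length `m` which are small enough fall into a bounded number of
classes modulo boundaries of small chains, where the bound does not depend on the scale. Such
bounds pass to the mapping cones of `t - 1` for `t` in a group `W` acting on `M`, and to iterated
cones. If `W` is large, then by the pigeonhole principle there are arbitrarily long sequences
`t₁, …, t_r` and arbitrarily small chains `a₀, …, a_r`, with `a₀` a point, such that each `a_i`
bounds the translation difference `t_i • a_{i-1} - a_{i-1}` in the iterated cone; moreover
the `t_i` can be chosen triangular with respect to characters `χ₁, …, χ_r` of `W`.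

If the action is free, then locally `M → M / W` is a trivial covering, and `M` is a union of `2 ^ n`
open invariant sets over each of which it is globally trivial. This gives `2 ^ n` equivariant maps
`φ_i : M → W` such that near every point one of them is constant. The cup product of the
coboundaries of the `χ_i ∘ φ_i` is invariant, and its value on the top component of `a_r` is the
product of the `χ_i (t_i)`, which is nonzero. For `r = 2 ^ n` it vanishes on small chains, a
contradiction.
-/

/-- The group of self-homeomorphisms of a topological space, under composition
(`f * g = f ∘ g`). -/
instance homeomorphGroup {X : Type*} [TopologicalSpace X] : Group (X ≃ₜ X) where
  mul f g := g.trans f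
  one := Homeomorph.refl X
  inv f := f.symm
  mul_assoc _ _ _ := Homeomorph.ext fun _ => rfl
  one_mul _ := Homeomorph.ext fun _ => rfl
  mul_one _ := Homeomorph.ext fun _ => rfl
  inv_mul_cancel f := Homeomorph.ext f.symm_apply_apply

open Finsupp Set
open scoped Topology

section LatticeCubes

variable {n : ℕ}

/-- The open cube of side `2η` centred at the point `ηq` of the lattice `ηℤⁿ`: neighbouring cubes
overlap, and the supremum metric on `Fin n → ℝ` makes them balls. -/
def latticeCube (η : ℝ) (q : Fin n → ℤ) : Set (Fin n → ℝ) :=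
  Metric.ball (fun i => η * q i) η

lemma exists_mem_latticeCube {η : ℝ} (hη : 0 < η) (y : Fin n → ℝ) :
    ∃ q, y ∈ latticeCube η q := by
  refine ⟨fun i => ⌊y i / η⌋, (dist_pi_lt_iff hη).2 fun i => ?_⟩
  have hle : ⌊y i / η⌋ * η ≤ y i := (le_div_iff₀ hη).1 (Int.floor_le _)
  have hlt : y i < (⌊y i / η⌋ + 1) * η := (div_lt_iff₀ hη).1 (Int.lt_floor_add_one _)
  rw [Real.dist_eq, abs_lt]
  constructor <;> linarith

lemma mem_Icc_of_mem_latticeCube {η : ℝ} (hη : 0 < η) {y : Fin n → ℝ} {q : Fin n → ℤ}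
    (hy : y ∈ latticeCube η q) :
    q ∈ Finset.Icc (fun i => ⌊y i / η⌋) (fun i => ⌊y i / η⌋ + 1) := by
  have hbounds (i : Fin n) : (q i : ℝ) - 1 < y i / η ∧ y i / η < q i + 1 := by
    have := (dist_pi_lt_iff hη).1 hy i
    rw [Real.dist_eq, abs_lt] at this
    rw [lt_div_iff₀ hη, div_lt_iff₀ hη]
    constructor <;> linarith
  refine Finset.mem_Icc.2 ⟨fun i => ?_, fun i => ?_⟩
  · exact Int.lt_add_one_iff.1 (Int.floor_lt.2 (by exact_mod_cast (hbounds i).2))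
  · have : q i - 1 ≤ ⌊y i / η⌋ := Int.le_floor.2 (by exact_mod_cast (hbounds i).1.le)
    linarith

lemma encard_setOf_mem_latticeCube_le {η : ℝ} (hη : 0 < η) (y : Fin n → ℝ) :
    {q | y ∈ latticeCube η q}.encard ≤ 2 ^ n := by
  calc {q | y ∈ latticeCube η q}.encard
      ≤ (Finset.Icc (fun i => ⌊y i / η⌋) (fun i => ⌊y i / η⌋ + 1) : Set (Fin n → ℤ)).encard :=
        encard_le_encard fun _ hq => mem_Icc_of_mem_latticeCube hη hq
    _ = 2 ^ n := by
      have hlen (k : ℤ) : (k + 1 + 1 - k).toNat = 2 := by omega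
      rw [encard_coe_eq_coe_finsetCard, Pi.card_Icc]
      simp [hlen]

end LatticeCubes

section Multiplicity

variable {ι : Type*} {n : ℕ}

lemma exists_open_refinement_encard_le_of_isCompact {B : Set (Fin n → ℝ)} (hB : IsCompact B)
    {U : ι → Set (Fin n → ℝ)} (hU : ∀ i, IsOpen (U i)) (hBU : B ⊆ ⋃ i, U i) :
    ∃ V : ι → Set (Fin n → ℝ), (∀ i, IsOpen (V i)) ∧ (∀ i, V i ⊆ U i) ∧ (B ⊆ ⋃ i, V i) ∧
      ∀ y, {i | y ∈ V i}.encard ≤ 2 ^ n := by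
  obtain ⟨δ, hδ, hδU⟩ := lebesgue_number_lemma_of_metric hB hU hBU
  have hη : 0 < δ / 2 := half_pos hδ
  have hcube (q : {q : Fin n → ℤ // (latticeCube (δ / 2) q ∩ B).Nonempty}) :
      ∃ i, latticeCube (δ / 2) q.1 ⊆ U i := by
    obtain ⟨b, hbq, hbB⟩ := q.2
    obtain ⟨i, hi⟩ := hδU b hbB
    refine ⟨i, fun y hy => hi ?_⟩
    calc dist y b ≤ dist y _ + dist b _ := dist_triangle_right _ _ _
      _ < δ / 2 + δ / 2 := add_lt_add hy hbq
      _ = δ := add_halves δ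
  choose σ hσ using hcube
  refine ⟨fun i => ⋃ q, ⋃ _ : σ q = i, latticeCube (δ / 2) q.1,
    fun i => isOpen_iUnion fun q => isOpen_iUnion fun _ => Metric.isOpen_ball,
    fun i => iUnion₂_subset fun q hq => hq ▸ hσ q, fun b hb => ?_, fun y => ?_⟩
  · obtain ⟨q, hq⟩ := exists_mem_latticeCube hη b
    exact mem_iUnion.2 ⟨σ ⟨q, b, hq, hb⟩, mem_iUnion₂.2 ⟨_, rfl, hq⟩⟩
  · calc {i | y ∈ ⋃ q, ⋃ _ : σ q = i, latticeCube (δ / 2) q.1}.encard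
        ≤ (σ '' {q | y ∈ latticeCube (δ / 2) q.1}).encard := by
          refine encard_le_encard fun i hi => ?_
          obtain ⟨q, rfl, hq⟩ := mem_iUnion₂.1 hi
          exact ⟨q, hq, rfl⟩
      _ ≤ (Subtype.val '' {q : {q : Fin n → ℤ // (latticeCube (δ / 2) q ∩ B).Nonempty} |
            y ∈ latticeCube (δ / 2) q.1}).encard :=
          (encard_image_le _ _).trans (Subtype.val_injective.encard_image _).ge
      _ ≤ {q | y ∈ latticeCube (δ / 2) q}.encard :=
          encard_le_encard (image_subset_iff.2 fun _ hq => hq)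
      _ ≤ 2 ^ n := encard_setOf_mem_latticeCube_le hη y

variable {X : Type*} [TopologicalSpace X]

/-- Every open cover of `X` indexed by `ι` can be shrunk to an open cover with the same index set
having multiplicity at most `r` at the points of `K`. -/
def RefinesWithMultiplicity (ι : Type*) (r : ℕ∞) (K : Set X) : Prop :=
  ∀ U : ι → Set X, (∀ i, IsOpen (U i)) → (⋃ i, U i = univ) →
    ∃ V : ι → Set X, (∀ i, IsOpen (V i)) ∧ (∀ i, V i ⊆ U i) ∧ (⋃ i, V i = univ) ∧
      ∀ x ∈ K, {i | x ∈ V i}.encard ≤ r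

lemma RefinesWithMultiplicity.mono {r : ℕ∞} {K L : Set X}
    (hL : RefinesWithMultiplicity ι r L) (hKL : K ⊆ L) : RefinesWithMultiplicity ι r K :=
  fun U hU hcov =>
    let ⟨V, hV, hVU, hVcov, hr⟩ := hL U hU hcov
    ⟨V, hV, hVU, hVcov, fun x hx => hr x (hKL hx)⟩

lemma RefinesWithMultiplicity.union {r : ℕ∞} {K L : Set X}
    (hK : RefinesWithMultiplicity ι r K) (hL : RefinesWithMultiplicity ι r L) :
    RefinesWithMultiplicity ι r (K ∪ L) := by
  intro U hU hcov
  obtain ⟨V, hV, hVU, hVcov, hVr⟩ := hK U hU hcov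
  obtain ⟨V', hV', hVV', hVcov', hVr'⟩ := hL V hV hVcov
  refine ⟨V', hV', fun i => (hVV' i).trans (hVU i), hVcov', fun x hx => ?_⟩
  rcases hx with hx | hx
  · exact (encard_le_encard fun i hi => hVV' i hi).trans (hVr x hx)
  · exact hVr' x hx

lemma exists_mem_nhds_refinesWithMultiplicity [T2Space X] (e : OpenPartialHomeomorph X (Fin n → ℝ))
    {x : X} (hx : x ∈ e.source) : ∃ K ∈ 𝓝 x, RefinesWithMultiplicity ι (2 ^ n) K := by
  obtain ⟨ρ, hρ, hball⟩ :=
    Metric.nhds_basis_closedBall.mem_iff.1 (e.open_target.mem_nhds (e.map_source hx))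
  have hcpt : IsCompact (Metric.closedBall (e x) ρ) := isCompact_closedBall _ _
  set K : Set X := e.symm '' Metric.closedBall (e x) ρ
  have hKclosed : IsClosed K :=
    (hcpt.image_of_continuousOn (e.continuousOn_symm.mono hball)).isClosed
  have hKsource : K ⊆ e.source := image_subset_iff.2 fun y hy => e.map_target (hball hy)
  have hKball : ∀ a ∈ K, e a ∈ Metric.closedBall (e x) ρ := by
    rintro _ ⟨y, hy, rfl⟩
    rwa [e.right_inv (hball hy)]
  refine ⟨K, ?_, fun U hU hcov => ?_⟩
  · refine Filter.mem_of_superset (e.continuousAt hx |>.preimage_mem_nhds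
      (Metric.closedBall_mem_nhds _ hρ) |> Filter.inter_mem (e.open_source.mem_nhds hx)) ?_
    rintro a ⟨ha, hae⟩
    exact ⟨e a, hae, e.left_inv ha⟩
  obtain ⟨V, hV, hVU, hVcov, hVr⟩ := exists_open_refinement_encard_le_of_isCompact hcpt
    (U := fun i => e.target ∩ e.symm ⁻¹' U i) (fun i => e.isOpen_inter_preimage_symm (hU i))
    fun y hy => by
      obtain ⟨i, hi⟩ := mem_iUnion.1 (hcov.ge (mem_univ (e.symm y)))
      exact mem_iUnion.2 ⟨i, hball hy, hi⟩
  refine ⟨fun i => U i \ K ∪ e.source ∩ e ⁻¹' V i,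
    fun i => ((hU i).sdiff hKclosed).union (e.isOpen_inter_preimage (hV i)), fun i => ?_,
    eq_univ_of_forall fun a => ?_, fun a ha => (encard_le_encard fun i hi => ?_).trans (hVr (e a))⟩
  · refine union_subset sdiff_subset fun a ha => ?_
    simpa [e.left_inv ha.1] using (hVU i ha.2).2
  · by_cases ha : a ∈ K
    · obtain ⟨i, hi⟩ := mem_iUnion.1 (hVcov (hKball a ha))
      exact mem_iUnion.2 ⟨i, Or.inr ⟨hKsource ha, hi⟩⟩
    · obtain ⟨i, hi⟩ := mem_iUnion.1 (hcov.ge (mem_univ a))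
      exact mem_iUnion.2 ⟨i, Or.inl ⟨hi, ha⟩⟩
  · exact hi.resolve_left (fun h => h.2 ha) |>.2

lemma refinesWithMultiplicity_univ [T2Space X] [CompactSpace X]
    (hX : ∀ x : X, ∃ e : OpenPartialHomeomorph X (Fin n → ℝ), x ∈ e.source) :
    RefinesWithMultiplicity ι (2 ^ n) (univ : Set X) := by
  refine isCompact_univ.induction_on (p := RefinesWithMultiplicity ι (2 ^ n)) ?_
    (fun K L hKL hL => hL.mono hKL) (fun K L hK hL => hK.union hL) fun x _ => ?_
  · exact fun U hU hcov => ⟨U, hU, fun _ => Subset.rfl, hcov, fun x hx => hx.elim⟩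
  · obtain ⟨e, hx⟩ := hX x
    obtain ⟨K, hK, hKr⟩ := exists_mem_nhds_refinesWithMultiplicity (ι := ι) e hx
    exact ⟨K, mem_nhdsWithin_of_mem_nhds hK, hKr⟩

end Multiplicity

section Colouring

variable {ι X : Type*}

/-- The locus where every function of the family `f` indexed by `S` exceeds every function not
indexed by `S`. -/
def dominanceSet (f : ι → X → ℝ) (S : Finset ι) : Set X :=
  {x | ∀ i ∈ S, ∀ j ∉ S, f j x < f i x}

lemma isOpen_dominanceSet [TopologicalSpace X] [Finite ι] {f : ι → X → ℝ}
    (hf : ∀ i, Continuous (f i)) (S : Finset ι) : IsOpen (dominanceSet f S) := by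
  simp only [dominanceSet, ofPred_forall]
  exact isOpen_iInter_of_finite fun i => isOpen_iInter_of_finite fun _ =>
    isOpen_iInter_of_finite fun j => isOpen_iInter_of_finite fun _ => isOpen_lt (hf j) (hf i)

lemma eq_of_mem_dominanceSet {f : ι → X → ℝ} {S T : Finset ι} {x : X} (hST : S.card = T.card)
    (hS : x ∈ dominanceSet f S) (hT : x ∈ dominanceSet f T) : S = T := by
  by_contra hne
  obtain ⟨i, hiS, hiT⟩ := Finset.not_subset.1 fun h => hne (Finset.eq_of_subset_of_card_le h hST.ge)
  obtain ⟨j, hjT, hjS⟩ :=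
    Finset.not_subset.1 fun h => hne (Finset.eq_of_subset_of_card_le h hST.le).symm
  exact lt_asymm (hS i hiS j hjS) (hT j hjT i hiT)

lemma exists_eq_on_dominanceSet (f : ι → X → ℝ) (k : ℕ) (s : Finset ι → ι) :
    ∃ c : X → ι, ∀ S : Finset ι, S.card = k → ∀ x ∈ dominanceSet f S, c x = s S := by
  have hselect (x : X) :
      ∃ i, ∀ S : Finset ι, S.card = k → x ∈ dominanceSet f S → i = s S := by
    by_cases h : ∃ S : Finset ι, S.card = k ∧ x ∈ dominanceSet f S
    · obtain ⟨S, hS, hx⟩ := h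
      exact ⟨s S, fun T hT hx' => by rw [eq_of_mem_dominanceSet (hS.trans hT.symm) hx hx']⟩
    · exact ⟨s ∅, fun S hS hx => (h ⟨S, hS, hx⟩).elim⟩
  choose c hc using hselect
  exact ⟨c, fun S hS x hx => hc x S hS hx⟩

lemma exists_mem_dominanceSet_of_encard_le [TopologicalSpace X] [Finite ι] {U : ι → Set X}
    (f : PartitionOfUnity ι X) (hf : f.IsSubordinate U) {x : X} {r : ℕ}
    (hr : {i | x ∈ U i}.encard ≤ r) :
    ∃ S : Finset ι, S.Nonempty ∧ S.card ≤ r ∧ (∀ i ∈ S, x ∈ U i) ∧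
      x ∈ dominanceSet (fun i => f i) S := by
  classical
  cases nonempty_fintype ι
  let S : Finset ι := {i | 0 < f i x}
  have hmem {i : ι} : i ∈ S ↔ 0 < f i x := by simp [S]
  have hSU : ∀ i ∈ S, x ∈ U i := fun i hi => hf i (subset_tsupport _ (hmem.1 hi).ne')
  refine ⟨S, (f.exists_pos (mem_univ x)).imp fun _ => hmem.2, ?_, hSU, fun i hi j hj =>
    (not_lt.1 (mt hmem.2 hj)).trans_lt (hmem.1 hi)⟩
  have := (encard_le_encard (s := (S : Set ι)) hSU).trans hr
  rwa [encard_coe_eq_coe_finsetCard, Nat.cast_le] at this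

/-- Ostrand's colouring: the sets dominated by `j + 1` functions of a partition of unity are
pairwise disjoint, so the `j`-th colour can select an index on each of them independently. -/
lemma exists_locallyConstant_selectors [TopologicalSpace X] [NormalSpace X] [Finite ι] {r : ℕ}
    {U : ι → Set X} (hU : ∀ i, IsOpen (U i)) (hcov : ⋃ i, U i = univ)
    (hr : ∀ x, {i | x ∈ U i}.encard ≤ r) :
    ∃ c : Fin r → X → ι, ∀ x, ∃ j, x ∈ U (c j x) ∧ ∀ᶠ y in 𝓝 x, c j y = c j x := by
  cases isEmpty_or_nonempty X
  · exact ⟨fun _ => isEmptyElim, isEmptyElim⟩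
  have : Nonempty ι := nonempty_of_nonempty_iUnion_eq_univ hcov
  obtain ⟨f, hf⟩ := PartitionOfUnity.exists_isSubordinate_of_locallyFinite isClosed_univ U hU
    (locallyFinite_of_finite U) hcov.ge
  choose! s hs using fun (S : Finset ι) (hS : S.Nonempty) => hS
  choose c hc using fun j : Fin r => exists_eq_on_dominanceSet (fun i => f i) (j + 1) s
  refine ⟨c, fun x => ?_⟩
  obtain ⟨S, hS, hSr, hSU, hx⟩ := exists_mem_dominanceSet_of_encard_le f hf (hr x)
  have hSpos := hS.card_pos
  let j : Fin r := ⟨S.card - 1, by omega⟩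
  have hcj := hc j S (Nat.sub_add_cancel hSpos).symm
  refine ⟨j, hcj x hx ▸ hSU _ (hs S hS), ?_⟩
  filter_upwards [(isOpen_dominanceSet (fun i => (f i).continuous) S).mem_nhds hx] with y hy
  rw [hcj y hy, hcj x hx]

end Colouring

section EquivariantMaps

lemma exists_rightInverse_leftInvOn {α β : Type*} {f : α → β} (hf : Function.Surjective f)
    {s : Set α} (hs : InjOn f s) : ∃ g, Function.RightInverse g f ∧ LeftInvOn g f s := by
  have hlift (y : β) : ∃ x, f x = y ∧ ∀ x' ∈ s, f x' = y → x = x' := by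
    by_cases h : ∃ x ∈ s, f x = y
    · obtain ⟨x, hx, rfl⟩ := h
      exact ⟨x, rfl, fun x' hx' hxx' => hs hx hx' hxx'.symm⟩
    · obtain ⟨x, hx⟩ := hf y
      exact ⟨x, hx, fun x' hx' hfx' => (h ⟨x', hx', hfx'⟩).elim⟩
  choose g hg hgs using hlift
  exact ⟨g, hg, fun x hx => hgs _ x hx rfl⟩

variable {W E X : Type*} [AddGroup W] [AddAction W E] [TopologicalSpace E] [TopologicalSpace X]

lemma exists_equivariant_locallyConstantOn {π : E → X}
    (hπ : IsAddQuotientCoveringMap π W) (a : E) :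
    ∃ U : Set X, IsOpen U ∧ π a ∈ U ∧ ∃ φ : E → W, (∀ g x, φ (g +ᵥ x) = g + φ x) ∧
      ∀ x, π x ∈ U → ∀ᶠ y in 𝓝 x, φ y = φ x := by
  have := hπ.isCancelVAdd
  have := hπ.toContinuousConstVAdd
  obtain ⟨N, hN, hNdisj⟩ := hπ.disjoint a
  obtain ⟨A, hAN, hAopen, haA⟩ := mem_nhds_iff.1 hN
  have hinj : InjOn π A := fun u hu v hv huv => by
    obtain ⟨g, rfl⟩ := hπ.apply_eq_iff_mem_orbit.1 huv
    have hg : g = 0 := hNdisj g ⟨g +ᵥ v, mem_image_of_mem _ (hAN hv), hAN hu⟩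
    simp only [hg, zero_vadd]
  obtain ⟨s, hs, hsA⟩ := exists_rightInverse_leftInvOn hπ.surjective hinj
  have hcoord (x : E) : ∃ g : W, g +ᵥ s (π x) = x :=
    hπ.apply_eq_iff_mem_orbit.1 (hs (π x)).symm
  choose φ hφ using hcoord
  have hφ_eq {g : W} {x : E} (h : g +ᵥ s (π x) = x) : φ x = g :=
    IsCancelVAdd.right_cancel _ _ _ ((hφ x).trans h.symm)
  refine ⟨π '' A, hπ.isOpenQuotientMap.isOpenMap A hAopen, mem_image_of_mem π haA, φ,
    fun g x => hφ_eq ?_, ?_⟩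
  · rw [hπ.map_vadd, add_vadd, hφ]
  · rintro x ⟨u, hu, hux⟩
    have hφ_translate (v : E) (hv : v ∈ A) : φ (φ x +ᵥ v) = φ x :=
      hφ_eq (by rw [hπ.map_vadd, hsA hv])
    have hxu : -φ x +ᵥ x = u := by rw [neg_vadd_eq_iff, ← hsA hu, hux, hφ]
    filter_upwards [(hAopen.preimage (continuous_const_vadd (-φ x))).mem_nhds
      (show -φ x +ᵥ x ∈ A by rwa [hxu])] with y hy
    simpa using hφ_translate _ hy

end EquivariantMaps

lemma exists_openPartialHomeomorph_of_isLocalHomeomorph {n : ℕ} {M X : Type*} [TopologicalSpace M]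
    [ChartedSpace (EuclideanSpace ℝ (Fin n)) M] [TopologicalSpace X] {π : M → X}
    (hπ : IsLocalHomeomorph π) (hsurj : Function.Surjective π) (b : X) :
    ∃ e : OpenPartialHomeomorph X (Fin n → ℝ), b ∈ e.source := by
  obtain ⟨x, rfl⟩ := hsurj b
  obtain ⟨e, hxe, rfl⟩ := hπ x
  refine ⟨(e.symm.trans (chartAt (EuclideanSpace ℝ (Fin n)) x)).trans
    (EuclideanSpace.equiv (Fin n) ℝ).toHomeomorph.toOpenPartialHomeomorph, ?_⟩
  simp [e.map_source hxe, e.left_inv hxe]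

theorem exists_equivariant_locallyConstant {n : ℕ} {W M : Type*} [AddGroup W] [Finite W]
    [TopologicalSpace M] [T2Space M] [CompactSpace M]
    [ChartedSpace (EuclideanSpace ℝ (Fin n)) M] [AddAction W M] [ContinuousConstVAdd W M]
    [IsCancelVAdd W M] :
    ∃ φ : Fin (2 ^ n) → M → W, (∀ i g x, φ i (g +ᵥ x) = g + φ i x) ∧
      ∀ x, ∃ i, ∀ᶠ y in 𝓝 x, φ i y = φ i x := by
  have := ChartedSpace.locallyCompactSpace (EuclideanSpace ℝ (Fin n)) M
  let π : M → Quotient (AddAction.orbitRel W M) := Quotient.mk _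
  have hπ : IsAddQuotientCoveringMap π W :=
    isAddQuotientCoveringMap_quotientMk_of_properlyDiscontinuousVAdd
  have : T2Space (Quotient (AddAction.orbitRel W M)) :=
    t2Space_of_properlyDiscontinuousVAdd_of_t2Space
  have hcharts := exists_openPartialHomeomorph_of_isLocalHomeomorph (n := n)
    hπ.isCoveringMap.isLocalHomeomorph hπ.surjective
  choose U hU hmemU φ hφ hφU using fun x => exists_equivariant_locallyConstantOn hπ x
  obtain ⟨t, ht⟩ := isCompact_univ.elim_finite_subcover U hU fun b _ => by
    obtain ⟨x, rfl⟩ := hπ.surjective b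
    exact mem_iUnion.2 ⟨x, hmemU x⟩
  obtain ⟨V, hV, hVU, hVcov, hVr⟩ := refinesWithMultiplicity_univ hcharts (fun a : t => U a)
    (fun a => hU a) (by rw [iUnion_subtype]; exact univ_subset_iff.1 ht)
  obtain ⟨c, hc⟩ := exists_locallyConstant_selectors (r := 2 ^ n) hV hVcov
    fun b => by exact_mod_cast hVr b (mem_univ b)
  refine ⟨fun i x => φ (c i (π x)) x, fun i g x => by simp only [hπ.map_vadd, hφ], fun x => ?_⟩
  obtain ⟨i, hxi, hi⟩ := hc (π x)
  refine ⟨i, ?_⟩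
  filter_upwards [hφU _ x (hVU _ hxi), hπ.continuous.continuousAt.eventually hi] with y hy hcy
  rw [hcy, hy]

section Supported

variable {R α V : Type*} [Semiring R] [AddCommMonoid V] [Module R V]

lemma apply_mem_of_mem_supported {s : Set α} {v : α →₀ R} (hv : v ∈ supported R R s)
    (f : (α →₀ R) →ₗ[R] V) (P : Submodule R V) (hf : ∀ a ∈ s, f (single a 1) ∈ P) : f v ∈ P := by
  rw [supported_eq_span_single] at hv
  refine (Submodule.span_le (p := P.comap f)).2 ?_ hv
  rintro _ ⟨a, ha, rfl⟩
  exact hf a ha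

lemma eq_of_mem_supported {s : Set α} {v : α →₀ R} (hv : v ∈ supported R R s)
    {f g : (α →₀ R) →ₗ[R] V} (hfg : ∀ a ∈ s, f (single a 1) = g (single a 1)) : f v = g v := by
  rw [supported_eq_span_single] at hv
  refine LinearMap.eqOn_span ?_ hv
  rintro _ ⟨a, ha, rfl⟩
  exact hfg a ha

lemma linearMap_ext_single {f g : (α →₀ R) →ₗ[R] V}
    (h : ∀ a, f (single a 1) = g (single a 1)) : f = g :=
  Finsupp.lhom_ext' fun a => LinearMap.ext_ring (h a)

end Supported

/-- Ordered chains: formal combinations of lists of points. The empty list is a simplex of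
dimension `-1`, so the complex is augmented. -/
abbrev OrderedChain (F M : Type*) [Zero F] := List M →₀ F

namespace OrderedChain

section Algebra

variable {F M N K : Type*} [CommRing F]

/-- The cone operator prepending the vertex `x`. -/
noncomputable def cons (x : M) : OrderedChain F M →ₗ[F] OrderedChain F M :=
  Finsupp.lmapDomain F F (List.cons x)

@[simp] lemma cons_single (x : M) (l : List M) (a : F) :
    cons x (single l a) = single (x :: l) a := by
  simp [cons]

/-- The boundary of a single list, the alternating sum of its faces. -/
noncomputable def listBoundary : List M → OrderedChain F M
  | [] => 0
  | x :: l => single l 1 - cons x (listBoundary l)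

/-- The boundary operator of ordered chains. -/
noncomputable def boundary : OrderedChain F M →ₗ[F] OrderedChain F M :=
  Finsupp.linearCombination F listBoundary

lemma boundary_single (l : List M) : boundary (single l (1 : F)) = listBoundary l := by
  simp [boundary]

@[simp] lemma boundary_single_nil : boundary (single ([] : List M) (1 : F)) = 0 := by
  simp [boundary_single, listBoundary]

lemma boundary_cons (x : M) (v : OrderedChain F M) :
    boundary (cons x v) = v - cons x (boundary v) := by
  have h : boundary ∘ₗ cons x = LinearMap.id - cons x ∘ₗ boundary (F := F) :=
    linearMap_ext_single fun l => by simp [boundary_single, listBoundary]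
  exact LinearMap.congr_fun h v

lemma boundary_boundary (v : OrderedChain F M) : boundary (boundary v) = 0 := by
  have h : boundary ∘ₗ boundary = (0 : OrderedChain F M →ₗ[F] OrderedChain F M) := by
    refine linearMap_ext_single fun l => ?_
    simp only [LinearMap.comp_apply, LinearMap.zero_apply]
    induction l with
    | nil => simp
    | cons x l ih => rw [← cons_single, boundary_cons, map_sub, boundary_cons, ih]; simp
  exact LinearMap.congr_fun h v

/-- The chain map induced by a map of points. -/
noncomputable def map (f : M → N) : OrderedChain F M →ₗ[F] OrderedChain F N :=
  Finsupp.lmapDomain F F (List.map f)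

@[simp] lemma map_single (f : M → N) (l : List M) (a : F) :
    map f (single l a) = single (l.map f) a := by
  simp [map]

lemma map_cons (f : M → N) (x : M) (v : OrderedChain F M) :
    map f (cons x v) = cons (f x) (map f v) := by
  have h : map f ∘ₗ cons x = cons (f x) ∘ₗ map (F := F) f :=
    linearMap_ext_single fun l => by simp
  exact LinearMap.congr_fun h v

lemma boundary_map (f : M → N) (v : OrderedChain F M) :
    boundary (map f v) = map f (boundary v) := by
  have h : boundary ∘ₗ map f = map f ∘ₗ boundary (F := F) := by
    refine linearMap_ext_single fun l => ?_
    simp only [LinearMap.comp_apply]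
    induction l with
    | nil => simp
    | cons x l ih =>
      rw [← cons_single, map_cons, boundary_cons, ih, boundary_cons, map_sub, map_cons]
  exact LinearMap.congr_fun h v

lemma map_map (f : M → N) (g : N → K) (v : OrderedChain F M) :
    map g (map f v) = map (g ∘ f) v := by
  have h : map g ∘ₗ map f = map (F := F) (g ∘ f) := linearMap_ext_single fun l => by simp
  exact LinearMap.congr_fun h v

lemma map_id (v : OrderedChain F M) : map (id : M → M) v = v := by
  have h : map id = (LinearMap.id : OrderedChain F M →ₗ[F] OrderedChain F M) :=
    linearMap_ext_single fun l => by simp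
  exact LinearMap.congr_fun h v

/-- The prism over a single list, running from its image under `f` to its image under `g`. -/
noncomputable def listPrism (f g : M → N) : List M → OrderedChain F N
  | [] => 0
  | x :: l => single (f x :: g x :: l.map g) 1 - cons (f x) (listPrism f g l)

/-- The prism operator, a chain homotopy from `map f` to `map g`. -/
noncomputable def prism (f g : M → N) : OrderedChain F M →ₗ[F] OrderedChain F N :=
  Finsupp.linearCombination F (listPrism f g)

lemma prism_single (f g : M → N) (l : List M) :
    prism f g (single l (1 : F)) = listPrism f g l := by
  simp [prism]

lemma prism_cons (f g : M → N) (x : M) (v : OrderedChain F M) :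
    prism f g (cons x v) = cons (f x) (cons (g x) (map g v)) - cons (f x) (prism f g v) := by
  have h : prism f g ∘ₗ cons x =
      cons (f x) ∘ₗ cons (g x) ∘ₗ map g - cons (f x) ∘ₗ prism (F := F) f g :=
    linearMap_ext_single fun l => by simp [prism_single, listPrism]
  exact LinearMap.congr_fun h v

lemma boundary_prism (f g : M → N) (v : OrderedChain F M) :
    boundary (prism f g v) = map g v - map f v - prism f g (boundary v) := by
  have h : boundary ∘ₗ prism f g = map g - map f - prism f g ∘ₗ boundary (F := F) := by
    refine linearMap_ext_single fun l => ?_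
    simp only [LinearMap.comp_apply, LinearMap.sub_apply]
    induction l with
    | nil => simp [prism_single, listPrism]
    | cons x l ih =>
      rw [← cons_single, prism_cons, map_sub, boundary_cons, boundary_cons, boundary_cons, ih,
        boundary_cons]
      simp only [map_sub, prism_cons, map_cons, boundary_map]
      abel
  exact LinearMap.congr_fun h v

/-- The lists obtained from `l` by deleting one entry. -/
def faces (l : List M) : Set (List M) := {l' | l'.Sublist l ∧ l'.length + 1 = l.length}

lemma boundary_single_mem_supported_faces (l : List M) :
    boundary (single l (1 : F)) ∈ supported F F (faces l) := by
  rw [boundary_single]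
  induction l with
  | nil => simp [listBoundary]
  | cons x l ih =>
    refine Submodule.sub_mem _ (single_mem_supported F _ ⟨l.sublist_cons_self x, rfl⟩) ?_
    refine apply_mem_of_mem_supported ih _ _ fun l' hl' => ?_
    rw [cons_single]
    exact single_mem_supported F _ ⟨hl'.1.cons_cons x, by simp [hl'.2]⟩

lemma map_mem_supported (f : M → N) {s : Set (List M)} {t : Set (List N)}
    (h : ∀ l ∈ s, l.map f ∈ t) {v : OrderedChain F M} (hv : v ∈ supported F F s) :
    map f v ∈ supported F F t :=
  apply_mem_of_mem_supported hv _ _ fun l hl => by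
    rw [map_single]
    exact single_mem_supported F _ (h l hl)

/-- The lists whose entries are images under `f` or `g` of entries of `l` and which are one entry
longer than `l`, as are all lists occurring in the prism over `l`. -/
def prismLists (f g : M → N) (l : List M) : Set (List N) :=
  {l' | (∀ y ∈ l', ∃ x ∈ l, y = f x ∨ y = g x) ∧ l'.length = l.length + 1}

lemma listPrism_mem_supported (f g : M → N) (l : List M) :
    listPrism f g l ∈ supported F F (prismLists f g l) := by
  induction l with
  | nil => simp [listPrism]
  | cons x l ih =>
    refine Submodule.sub_mem _ (single_mem_supported F _ ⟨?_, by simp⟩) ?_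
    · simp only [List.forall_mem_cons, List.forall_mem_map]
      exact ⟨⟨x, by simp, Or.inl rfl⟩, ⟨x, by simp, Or.inr rfl⟩,
        fun y hy => ⟨y, by simp [hy], Or.inr rfl⟩⟩
    · refine apply_mem_of_mem_supported ih _ _ fun l' hl' => ?_
      rw [cons_single]
      refine single_mem_supported F _ ⟨?_, by simp [hl'.2]⟩
      refine List.forall_mem_cons.2 ⟨⟨x, by simp, Or.inl rfl⟩, fun y hy => ?_⟩
      obtain ⟨a, ha, hya⟩ := hl'.1 y hy
      exact ⟨a, by simp [ha], hya⟩

lemma prism_mem_supported (f g : M → N) {s : Set (List M)} {t : Set (List N)}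
    (h : ∀ l ∈ s, prismLists f g l ⊆ t) {v : OrderedChain F M} (hv : v ∈ supported F F s) :
    prism f g v ∈ supported F F t :=
  apply_mem_of_mem_supported hv _ _ fun l hl => by
    rw [prism_single]
    exact supported_mono (h l hl) (listPrism_mem_supported f g l)

end Algebra

section Small

variable {F M N : Type*} [CommRing F] [PseudoMetricSpace M] [PseudoMetricSpace N]

/-- The lists of at most `m` points of `S`, at pairwise distances less than `ε`. -/
def smallLists (S : Set M) (m : ℕ) (ε : ℝ) : Set (List M) :=
  {l | (∀ x ∈ l, x ∈ S) ∧ l.length ≤ m ∧ ∀ x ∈ l, ∀ y ∈ l, dist x y < ε}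

variable (F) in
/-- The chains supported on `smallLists`. -/
noncomputable def smallChains (S : Set M) (m : ℕ) (ε : ℝ) : Submodule F (OrderedChain F M) :=
  supported F F (smallLists S m ε)

lemma smallLists_mono {S S' : Set M} {m m' : ℕ} {ε ε' : ℝ} (hS : S ⊆ S') (hm : m ≤ m')
    (hε : ε ≤ ε') : smallLists S m ε ⊆ smallLists S' m' ε' :=
  fun _ hl => ⟨fun x hx => hS (hl.1 x hx), hl.2.1.trans hm,
    fun x hx y hy => (hl.2.2 x hx y hy).trans_le hε⟩

lemma smallChains_mono {S S' : Set M} {m m' : ℕ} {ε ε' : ℝ} (hS : S ⊆ S') (hm : m ≤ m')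
    (hε : ε ≤ ε') : smallChains F S m ε ≤ smallChains F S' m' ε' :=
  supported_mono (smallLists_mono hS hm hε)

lemma map_mem_smallLists {S : Set M} {S' : Set N} {m : ℕ} {δ ε : ℝ} {f : M → N}
    (hf : MapsTo f S S') (hdist : ∀ x ∈ S, ∀ y ∈ S, dist x y < δ → dist (f x) (f y) < ε)
    {l : List M} (hl : l ∈ smallLists S m δ) : l.map f ∈ smallLists S' m ε := by
  refine ⟨?_, by simpa using hl.2.1, ?_⟩ <;> simp only [List.forall_mem_map]
  · exact fun x hx => hf (hl.1 x hx)
  · exact fun x hx y hy => hdist x (hl.1 x hx) y (hl.1 y hy) (hl.2.2 x hx y hy)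

lemma map_mem_smallChains {S : Set M} {S' : Set N} {m : ℕ} {δ ε : ℝ} {f : M → N}
    (hf : MapsTo f S S') (hdist : ∀ x ∈ S, ∀ y ∈ S, dist x y < δ → dist (f x) (f y) < ε)
    {z : OrderedChain F M} (hz : z ∈ smallChains F S m δ) : map f z ∈ smallChains F S' m ε :=
  map_mem_supported f (fun _ hl => map_mem_smallLists hf hdist hl) hz

lemma faces_subset_smallLists {S : Set M} {m : ℕ} {ε : ℝ} {l : List M}
    (hl : l ∈ smallLists S (m + 1) ε) : faces l ⊆ smallLists S m ε :=
  fun _ hl' => ⟨fun x hx => hl.1 x (hl'.1.subset hx), by have := hl'.2; have := hl.2.1; omega,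
    fun x hx y hy => hl.2.2 x (hl'.1.subset hx) y (hl'.1.subset hy)⟩

lemma cons_mem_smallChains_singleton {x : M} {m : ℕ} {ε : ℝ} (hε : 0 < ε) {z : OrderedChain F M}
    (hz : z ∈ smallChains F {x} m ε) : cons x z ∈ smallChains F {x} (m + 1) ε := by
  refine apply_mem_of_mem_supported hz _ _ fun l hl => ?_
  rw [cons_single]
  have hx : ∀ y ∈ x :: l, y = x := List.forall_mem_cons.2 ⟨rfl, hl.1⟩
  refine single_mem_supported F _ ⟨hx, by simpa using hl.2.1, fun y hy y' hy' => ?_⟩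
  rwa [hx y hy, hx y' hy', dist_self]

lemma prismLists_subset_smallLists {X : Type*} {f g : X → N} {l : List X} {S : Set N} {m : ℕ}
    {δ : ℝ} (hf : l.map f ∈ smallLists S m δ) (hg : l.map g ∈ smallLists S m δ)
    (hfg : ∀ x ∈ l, ∀ y ∈ l, dist (f x) (g y) < δ) :
    prismLists f g l ⊆ smallLists S (m + 1) δ := by
  simp only [smallLists, mem_ofPred_eq, List.forall_mem_map, List.length_map] at hf hg
  rintro l' ⟨hl', hlen⟩
  refine ⟨fun y hy => ?_, hlen.trans_le (Nat.succ_le_succ hf.2.1), fun y hy y' hy' => ?_⟩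
  · obtain ⟨x, hx, rfl | rfl⟩ := hl' y hy
    exacts [hf.1 x hx, hg.1 x hx]
  · obtain ⟨x, hx, rfl | rfl⟩ := hl' y hy <;> obtain ⟨x', hx', rfl | rfl⟩ := hl' y' hy'
    · exact hf.2.2 x hx x' hx'
    · exact hfg x hx x' hx'
    · exact dist_comm (f x') _ ▸ hfg x' hx' x hx
    · exact hg.2.2 x hx x' hx'

lemma exists_boundary_eq_map_sub_map {X T : Type*} [TopologicalSpace T] [PreconnectedSpace T]
    {f : T → X → N} (hf : ∀ x, Continuous fun t => f t x) {s : Set (List X)} {S : Set N} {m : ℕ}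
    {δ : ℝ} (hs : ∀ t, ∀ l ∈ s, l.map (f t) ∈ smallLists S m δ) {z : OrderedChain F X}
    (hz : z ∈ supported F F s) (hdz : boundary z = 0) (t t' : T) :
    ∃ w ∈ smallChains F S (m + 1) δ, boundary w = map (f t') z - map (f t) z := by
  let homologous (t t' : T) : Prop :=
    ∃ w ∈ smallChains F S (m + 1) δ, boundary w = map (f t') z - map (f t) z
  have : Std.Symm homologous := ⟨fun t t' ⟨w, hw, h⟩ =>
    ⟨-w, Submodule.neg_mem _ hw, by rw [map_neg, h, neg_sub]⟩⟩
  have : IsTrans T homologous := ⟨fun a b c ⟨w, hw, h⟩ ⟨w', hw', h'⟩ =>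
    ⟨w' + w, Submodule.add_mem _ hw' hw, by rw [map_add, h, h', sub_add_sub_cancel]⟩⟩
  refine PreconnectedSpace.induction₂ homologous (fun t => ?_) this t t'
  have hnear : ∀ᶠ t' in 𝓝 t, ∀ l ∈ z.support, ∀ x ∈ l, ∀ y ∈ l, dist (f t x) (f t' y) < δ := by
    classical
    simp only [← List.mem_toFinset, Filter.eventually_all_finset]
    intro l hl x hx y hy
    rw [List.mem_toFinset] at hx hy
    exact (continuous_const.dist (hf y)).continuousAt.eventually_lt_const
      ((hs t l (hz hl)).2.2 _ (List.mem_map_of_mem hx) _ (List.mem_map_of_mem hy))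
  filter_upwards [hnear] with t' hnear
  refine ⟨prism (f t) (f t') z, prism_mem_supported _ _ (s := z.support) (fun l hl => ?_)
    ((mem_supported F z).2 Subset.rfl), by rw [boundary_prism, hdz, map_zero, sub_zero]⟩
  exact prismLists_subset_smallLists (hs t l (hz hl)) (hs t' l (hz hl)) (hnear l hl)

end Small

section CyclesBound

variable {F M N : Type*} [CommRing F] [PseudoMetricSpace M] [PseudoMetricSpace N]

variable (F) in
/-- Every cycle of `δ`-small chains in `S` bounds an `ε`-small chain in `S'`. -/
def CyclesBound (S : Set M) (δ : ℝ) (S' : Set M) (ε : ℝ) : Prop :=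
  ∀ m, ∀ z ∈ smallChains F S m δ, boundary z = 0 →
    ∃ w ∈ smallChains F S' (m + 1) ε, boundary w = z

lemma CyclesBound.mono {S S₁ S' S₁' : Set M} {δ δ₁ ε ε₁ : ℝ} (h : CyclesBound F S δ S' ε)
    (hS : S₁ ⊆ S) (hδ : δ₁ ≤ δ) (hS' : S' ⊆ S₁') (hε : ε ≤ ε₁) : CyclesBound F S₁ δ₁ S₁' ε₁ :=
  fun m z hz hdz =>
    let ⟨w, hw, hwz⟩ := h m z (smallChains_mono hS le_rfl hδ hz) hdz
    ⟨w, smallChains_mono hS' le_rfl hε hw, hwz⟩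

lemma CyclesBound.of_leftInvOn {A A' : Set N} {S S' : Set M} {δ δ' ε ε' : ℝ}
    (h : CyclesBound F A δ A' ε) {e : M → N} {g : N → M} (hge : LeftInvOn g e S)
    (he : MapsTo e S A) (hed : ∀ x ∈ S, ∀ y ∈ S, dist x y < δ' → dist (e x) (e y) < δ)
    (hg : MapsTo g A' S') (hgd : ∀ x ∈ A', ∀ y ∈ A', dist x y < ε → dist (g x) (g y) < ε') :
    CyclesBound F S δ' S' ε' := by
  intro m z hz hdz
  obtain ⟨w, hw, hwz⟩ := h m (map e z) (map_mem_smallChains he hed hz)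
    (by rw [boundary_map, hdz, map_zero])
  refine ⟨map g w, map_mem_smallChains hg hgd hw, ?_⟩
  rw [boundary_map, hwz, map_map]
  refine eq_of_mem_supported (g := LinearMap.id) hz fun l hl => ?_
  have : l.map (g ∘ e) = l :=
    (List.map_congr_left fun x hx => hge (hl.1 x hx)).trans l.map_id
  rw [map_single, this, LinearMap.id_apply]

variable {E : Type*} [NormedAddCommGroup E] [NormedSpace ℝ E]

lemma cyclesBound_of_convex {K : Set E} (hK : Convex ℝ K) (hne : K.Nonempty) {δ : ℝ} (hδ : 0 < δ) :
    CyclesBound F K δ K δ := by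
  obtain ⟨c, hc⟩ := hne
  intro m z hz hdz
  let contract (t : unitInterval) (x : E) : E := AffineMap.lineMap c x (t : ℝ)
  have hmaps (t : unitInterval) : MapsTo (contract t) K K := fun x hx => hK.lineMap_mem hc hx t.2
  have hdist (t : unitInterval) (x y : E) (hxy : dist x y < δ) :
      dist (contract t x) (contract t y) < δ := by
    have hsub : contract t x - contract t y = (t : ℝ) • (x - y) := by
      simp only [contract, AffineMap.lineMap_apply, vsub_eq_sub, vadd_eq_add]
      module
    rw [dist_eq_norm, hsub, norm_smul, Real.norm_of_nonneg t.2.1]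
    exact (mul_le_of_le_one_left (norm_nonneg _) t.2.2).trans_lt (dist_eq_norm x y ▸ hxy)
  have hcont (x : E) : Continuous fun t => contract t x :=
    AffineMap.lineMap_continuous.comp continuous_subtype_val
  obtain ⟨w, hw, hdw⟩ := exists_boundary_eq_map_sub_map hcont
    (fun t l hl => map_mem_smallLists (hmaps t) (fun x _ y _ => hdist t x y) hl) hz hdz 0 1
  have hone : map (contract 1) z = z := by
    have : contract 1 = id := by ext x; simp [contract]
    rw [this, map_id]
  have hzero : map (contract 0) z ∈ smallChains F {c} m δ :=
    map_mem_smallChains (fun x _ => by simp [contract]) (fun x _ y _ => hdist 0 x y) hz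
  refine ⟨w + cons c (map (contract 0) z), Submodule.add_mem _ hw
    (smallChains_mono (singleton_subset_iff.2 hc) le_rfl le_rfl
      (cons_mem_smallChains_singleton hδ hzero)), ?_⟩
  rw [map_add, hdw, boundary_cons, boundary_map, hdz, hone]
  simp

lemma exists_isOpen_cyclesBound [ProperSpace E] (e : OpenPartialHomeomorph M E) {x : M}
    (hx : x ∈ e.source) {r : ℝ} (hr : 0 < r) :
    ∃ S, IsOpen S ∧ x ∈ S ∧ S ⊆ Metric.ball x r ∧ ∀ ε > 0, ∃ δ > 0, CyclesBound F S δ S ε := by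
  have hnhds : e.target ∩ e.symm ⁻¹' Metric.ball x r ∈ 𝓝 (e x) := by
    refine Filter.inter_mem (e.open_target.mem_nhds (e.map_source hx))
      ((e.symm.continuousAt (e.map_source hx)).preimage_mem_nhds ?_)
    rw [e.left_inv hx]
    exact Metric.ball_mem_nhds _ hr
  obtain ⟨s, hs, hsub⟩ := Metric.nhds_basis_closedBall.mem_iff.1 hnhds
  have hcpt : IsCompact (Metric.closedBall (e x) s) := isCompact_closedBall _ _
  have hcont : ContinuousOn e.symm (Metric.closedBall (e x) s) :=
    e.continuousOn_symm.mono fun y hy => (hsub hy).1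
  have hcont' : ContinuousOn e (e.symm '' Metric.closedBall (e x) s) :=
    e.continuousOn.mono (image_subset_iff.2 fun y hy => e.map_target (hsub hy).1)
  have hunif := Metric.uniformContinuousOn_iff.1 (hcpt.uniformContinuousOn_of_continuous hcont)
  have hunif' := Metric.uniformContinuousOn_iff.1
    ((hcpt.image_of_continuousOn hcont).uniformContinuousOn_of_continuous hcont')
  set S := e.source ∩ e ⁻¹' Metric.ball (e x) s
  have hSball {y : M} (hy : y ∈ S) : e y ∈ Metric.closedBall (e x) s :=
    Metric.ball_subset_closedBall hy.2
  have hSimage {y : M} (hy : y ∈ S) : y ∈ e.symm '' Metric.closedBall (e x) s :=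
    ⟨e y, hSball hy, e.left_inv hy.1⟩
  refine ⟨S, e.isOpen_inter_preimage Metric.isOpen_ball, ⟨hx, Metric.mem_ball_self hs⟩,
    fun y hy => ?_, fun ε hε => ?_⟩
  · simpa [e.left_inv hy.1] using (hsub (hSball hy)).2
  · obtain ⟨δ₁, hδ₁, hsymm⟩ := hunif ε hε
    obtain ⟨δ, hδ, he⟩ := hunif' δ₁ hδ₁
    refine ⟨δ, hδ, (cyclesBound_of_convex (convex_ball (e x) s) ⟨_, Metric.mem_ball_self hs⟩
      hδ₁).of_leftInvOn (fun y hy => e.left_inv hy.1) (fun y hy => hy.2)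
      (fun y hy y' hy' => he y (hSimage hy) y' (hSimage hy')) (fun y hy => ?_)
      fun y hy y' hy' => hsymm y (Metric.ball_subset_closedBall hy) y'
        (Metric.ball_subset_closedBall hy')⟩
    have hyt := (hsub (Metric.ball_subset_closedBall hy)).1
    exact ⟨e.map_target hyt, by rwa [mem_preimage, e.right_inv hyt]⟩

lemma exists_uniform_cyclesBound (E : Type*) [NormedAddCommGroup E] [NormedSpace ℝ E]
    [ProperSpace E] [ChartedSpace E M] [CompactSpace M] {R : ℝ} (hR : 0 < R) :
    ∃ r > 0, ∀ ε > 0, ∃ δ > 0, ∀ x : M,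
      CyclesBound F (Metric.ball x r) δ (Metric.ball x R) ε := by
  choose S hSopen hxS hSball hS using fun x : M =>
    exists_isOpen_cyclesBound (F := F) (chartAt E x) (mem_chart_source E x) (half_pos hR)
  obtain ⟨t, ht⟩ := isCompact_univ.elim_finite_subcover S hSopen
    fun x _ => mem_iUnion.2 ⟨x, hxS x⟩
  obtain ⟨r, hr, hrt⟩ := lebesgue_number_lemma_of_metric (c := fun a : t => S a) isCompact_univ
    (fun a => hSopen a) (by rwa [iUnion_subtype])
  refine ⟨r, hr, fun ε hε => ?_⟩
  choose δ hδ hδS using fun a => hS a ε hε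
  obtain ⟨δ₀, hδ₀, hδ₀pos⟩ : ∃ δ₀, (∀ a ∈ t, δ₀ ≤ δ a) ∧ 0 < δ₀ := by
    have hle : ∀ᶠ d in 𝓝[>] (0 : ℝ), ∀ a ∈ t, d ≤ δ a :=
      (Filter.eventually_all_finset t).2 fun a _ => nhdsWithin_le_nhds (eventually_le_nhds (hδ a))
    exact (hle.and self_mem_nhdsWithin).exists
  refine ⟨δ₀, hδ₀pos, fun x => ?_⟩
  obtain ⟨⟨a, ha⟩, hxa⟩ := hrt x trivial
  refine (hδS a).mono hxa (hδ₀ a ha) (fun y hy => ?_) le_rfl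
  have hya := Metric.mem_ball.1 (hSball a hy)
  have hax := Metric.mem_ball.1 (hSball a (hxa (Metric.mem_ball_self hr)))
  exact Metric.mem_ball.2 (by linarith [dist_triangle_right y x a])

end CyclesBound

section Subdivision

variable {F M : Type*} [CommRing F] [PseudoMetricSpace M]

/-- On `η`-small lists of at most `m` points, the operator `Θ` behaves like a barycentric
subdivision: it commutes with the boundary and replaces each list by an `ε`-small chain staying
within distance `R`. It does not alter lists which are already `δ`-small. -/
structure IsSubdivision (Θ : OrderedChain F M →ₗ[F] OrderedChain F M) (m : ℕ) (η R ε δ : ℝ) :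
    Prop where
  mem : ∀ l ∈ smallLists univ m η,
    Θ (single l 1) ∈ smallChains F {y | ∀ x ∈ l, dist y x < R} l.length ε
  boundary_single : ∀ l ∈ smallLists univ m η,
    boundary (Θ (single l 1)) = Θ (boundary (single l 1))
  eq_self : ∀ l ∈ smallLists univ m δ, Θ (single l 1) = single l 1

namespace IsSubdivision

variable {Θ : OrderedChain F M →ₗ[F] OrderedChain F M} {m : ℕ} {η R ε δ : ℝ}

lemma mono (hΘ : IsSubdivision Θ m η R ε δ) {η' R' ε' δ' : ℝ} (hη : η' ≤ η) (hR : R ≤ R')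
    (hε : ε ≤ ε') (hδ : δ' ≤ δ) : IsSubdivision Θ m η' R' ε' δ' where
  mem l hl := smallChains_mono (fun _ hy x hx => (hy x hx).trans_le hR) le_rfl hε
    (hΘ.mem l (smallLists_mono Subset.rfl le_rfl hη hl))
  boundary_single l hl := hΘ.boundary_single l (smallLists_mono Subset.rfl le_rfl hη hl)
  eq_self l hl := hΘ.eq_self l (smallLists_mono Subset.rfl le_rfl hδ hl)

lemma boundary_apply (hΘ : IsSubdivision Θ m η R ε δ) {z : OrderedChain F M}
    (hz : z ∈ smallChains F univ m η) : boundary (Θ z) = Θ (boundary z) :=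
  eq_of_mem_supported (f := boundary ∘ₗ Θ) (g := Θ ∘ₗ boundary) hz hΘ.boundary_single

lemma apply_mem (hΘ : IsSubdivision Θ m η R ε δ) {z : OrderedChain F M}
    (hz : z ∈ smallChains F univ m η) : Θ z ∈ smallChains F univ m ε :=
  apply_mem_of_mem_supported hz _ _ fun l hl =>
    smallChains_mono (subset_univ _) hl.2.1 le_rfl (hΘ.mem l hl)

lemma apply_eq_self (hΘ : IsSubdivision Θ m η R ε δ) {z : OrderedChain F M}
    (hz : z ∈ smallChains F univ m δ) : Θ z = z :=
  eq_of_mem_supported (g := LinearMap.id) hz hΘ.eq_self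

lemma boundary_apply_boundary_single (hΘ : IsSubdivision Θ m η R ε δ) {l : List M}
    (hl : l ∈ smallLists univ (m + 1) η) : boundary (Θ (boundary (single l 1))) = 0 := by
  rw [hΘ.boundary_apply (supported_mono (faces_subset_smallLists hl)
    (boundary_single_mem_supported_faces l)), boundary_boundary, map_zero]

lemma apply_boundary_single_mem (hΘ : IsSubdivision Θ m η R ε δ) {l : List M}
    (hlen : l.length = m + 1) (hl : l ∈ smallLists univ (m + 1) η) {a : M} (ha : a ∈ l) :
    Θ (boundary (single l 1)) ∈ smallChains F (Metric.ball a (R + η)) m ε := by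
  refine apply_mem_of_mem_supported (boundary_single_mem_supported_faces l) _ _ fun l' hl' => ?_
  refine supported_mono ?_ (hΘ.mem l' (faces_subset_smallLists hl hl'))
  have hlen' : l'.length = m := Nat.succ_injective (hl'.2.trans hlen)
  refine fun k hk => ⟨fun y hy => ?_, hlen' ▸ hk.2.1, hk.2.2⟩
  obtain ⟨b, hb⟩ := List.exists_mem_of_length_pos ((List.length_pos_of_mem hy).trans_le hk.2.1)
  exact Metric.mem_ball.2 (by
    linarith [dist_triangle y b a, hk.1 y hy b hb, hl.2.2 b (hl'.1.subset hb) a ha])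

lemma exists_filling (hΘ : IsSubdivision Θ m η R ε δ) {R' ε' r : ℝ} (hηR' : η ≤ R' / 2)
    (hRr : R + η ≤ r) (hδε' : δ ≤ ε')
    (hfill : ∀ a : M, CyclesBound F (Metric.ball a r) ε (Metric.ball a (R' / 2)) ε')
    {l : List M} (hlen : l.length = m + 1) (hl : l ∈ smallLists univ (m + 1) η) :
    ∃ w ∈ smallChains F {y | ∀ x ∈ l, dist y x < R'} l.length ε',
      boundary w = Θ (boundary (single l 1)) ∧
        (l ∈ smallLists univ (m + 1) δ → w = single l 1) := by
  by_cases hlδ : l ∈ smallLists univ (m + 1) δ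
  · refine ⟨single l 1, single_mem_supported F _ ⟨fun y hy x hx => ?_, le_rfl, fun x hx y hy =>
      (hlδ.2.2 x hx y hy).trans_le hδε'⟩, ?_, fun _ => rfl⟩
    · linarith [hl.2.2 y hy x hx, dist_nonneg (x := y) (y := x)]
    · exact (hΘ.apply_eq_self (supported_mono (faces_subset_smallLists hlδ)
        (boundary_single_mem_supported_faces l))).symm
  · obtain ⟨a, ha⟩ := List.exists_mem_of_length_pos (l := l) (by omega)
    obtain ⟨w, hw, hdw⟩ := hfill a m _ (smallChains_mono (Metric.ball_subset_ball hRr) le_rfl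
      le_rfl (hΘ.apply_boundary_single_mem hlen hl ha)) (hΘ.boundary_apply_boundary_single hl)
    refine ⟨w, smallChains_mono (fun y hy x hx => ?_) hlen.ge le_rfl hw, hdw,
      fun h => (hlδ h).elim⟩
    linarith [dist_triangle y a x, Metric.mem_ball.1 hy, hl.2.2 a ha x hx]

lemma extend (hΘ : IsSubdivision Θ m η R ε δ) (hδη : δ ≤ η)
    (hfill : ∀ l : List M, l.length = m + 1 → l ∈ smallLists univ (m + 1) η →
      ∃ w ∈ smallChains F {y | ∀ x ∈ l, dist y x < R} l.length ε,
        boundary w = Θ (boundary (single l 1)) ∧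
          (l ∈ smallLists univ (m + 1) δ → w = single l 1)) :
    ∃ Θ' : OrderedChain F M →ₗ[F] OrderedChain F M, IsSubdivision Θ' (m + 1) η R ε δ := by
  choose! w hw hdw hwδ using hfill
  let Θ' : OrderedChain F M →ₗ[F] OrderedChain F M := Finsupp.linearCombination F fun l =>
    if l.length = m + 1 then w l else Θ (single l 1)
  have hΘ'_single (l : List M) :
      Θ' (single l 1) = if l.length = m + 1 then w l else Θ (single l 1) := by
    simp [Θ']
  have hΘ'_boundary {l : List M} (hl : l.length ≤ m + 1) :
      Θ' (boundary (single l 1)) = Θ (boundary (single l 1)) :=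
    eq_of_mem_supported (boundary_single_mem_supported_faces l) fun l' hl' => by
      rw [hΘ'_single, if_neg (by have := hl'.2; omega)]
  have hshort {l : List M} {κ : ℝ} (hl : l ∈ smallLists univ (m + 1) κ)
      (hlen : l.length ≠ m + 1) : l ∈ smallLists univ m κ :=
    ⟨hl.1, by have := hl.2.1; omega, hl.2.2⟩
  refine ⟨Θ', fun l hl => ?_, fun l hl => ?_, fun l hl => ?_⟩ <;>
    by_cases hlen : l.length = m + 1
  · rw [hΘ'_single, if_pos hlen]
    exact hw l hlen hl
  · rw [hΘ'_single, if_neg hlen]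
    exact hΘ.mem l (hshort hl hlen)
  · rw [hΘ'_single, if_pos hlen, hΘ'_boundary hl.2.1, hdw l hlen hl]
  · rw [hΘ'_single, if_neg hlen, hΘ'_boundary hl.2.1, hΘ.boundary_single l (hshort hl hlen)]
  · rw [hΘ'_single, if_pos hlen]
    exact hwδ l hlen (smallLists_mono Subset.rfl le_rfl hδη hl) hl
  · rw [hΘ'_single, if_neg hlen, hΘ.eq_self l (hshort hl hlen)]

lemma exists_boundary_eq_apply_map_sub (hΘ : IsSubdivision Θ (m + 1) η R ε δ) (hη : 0 < η)
    {ρ : M → M} (hρ : ∀ x, dist x (ρ x) < η / 3) {z : OrderedChain F M}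
    (hz : z ∈ smallChains F univ m (min δ (η / 3))) (hdz : boundary z = 0) :
    ∃ u ∈ smallChains F univ (m + 1) ε, boundary u = Θ (map ρ z) - z := by
  have hprism : prism id ρ z ∈ smallChains F univ (m + 1) η := by
    refine prism_mem_supported _ _ (fun l hl => ?_) hz
    have hdist {x y : M} (hx : x ∈ l) (hy : y ∈ l) : dist x y < η / 3 :=
      (hl.2.2 x hx y hy).trans_le (min_le_right _ _)
    refine prismLists_subset_smallLists (by rw [List.map_id]; exact
      ⟨hl.1, hl.2.1, fun x hx y hy => by linarith [hdist hx hy]⟩)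
      ⟨by simp, by simpa using hl.2.1, ?_⟩ fun x hx y hy => ?_
    · simp only [List.forall_mem_map]
      intro x hx y hy
      linarith [dist_triangle4_left x y (ρ x) (ρ y), hρ x, hρ y, hdist hx hy]
    · rw [id]
      linarith [dist_triangle x y (ρ y), hρ y, hdist hx hy]
  refine ⟨Θ (prism id ρ z), hΘ.apply_mem hprism, ?_⟩
  rw [hΘ.boundary_apply hprism, boundary_prism, hdz, map_zero, sub_zero, map_sub, map_id,
    hΘ.apply_eq_self (smallChains_mono Subset.rfl m.le_succ (min_le_left _ _) hz)]

end IsSubdivision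

lemma exists_isSubdivision (F E : Type*) [CommRing F] [NormedAddCommGroup E] [NormedSpace ℝ E]
    [ProperSpace E] [ChartedSpace E M] [CompactSpace M] (m : ℕ) :
    ∀ R > 0, ∃ η > 0, ∀ ε > 0, ∃ δ > 0, ∃ Θ : OrderedChain F M →ₗ[F] OrderedChain F M,
      IsSubdivision Θ m η R ε δ := by
  induction m with
  | zero =>
    have hnil {ε : ℝ} {l : List M} (hl : l ∈ smallLists univ 0 ε) : l = [] :=
      List.eq_nil_of_length_eq_zero (Nat.le_zero.1 hl.2.1)
    refine fun R _ => ⟨1, one_pos, fun ε _ => ⟨1, one_pos, LinearMap.id, fun l hl => ?_,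
      fun l _ => rfl, fun l _ => rfl⟩⟩
    obtain rfl := hnil hl
    exact single_mem_supported F _ ⟨by simp, by simp, by simp⟩
  | succ m ih =>
    intro R hR
    obtain ⟨r, hr, hfill⟩ := exists_uniform_cyclesBound (F := F) (M := M) E (half_pos hR)
    obtain ⟨η, hη, ih⟩ := ih (min (r / 2) R) (lt_min (half_pos hr) hR)
    set η' := min η (min (r / 2) (R / 2))
    have hη' : 0 < η' := lt_min hη (lt_min (half_pos hr) (half_pos hR))
    have hη'r : min (r / 2) R + η' ≤ r := by
      linarith [min_le_left (r / 2) R,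
        (min_le_right η _ : η' ≤ _).trans (min_le_left (r / 2) (R / 2))]
    refine ⟨η', hη', fun ε hε => ?_⟩
    obtain ⟨δ₁, hδ₁, hfill⟩ := hfill ε hε
    obtain ⟨δ, hδ, Θ, hΘ⟩ := ih (min δ₁ ε) (lt_min hδ₁ hε)
    set δ' := min δ (min ε η')
    replace hΘ := hΘ.mono (min_le_left _ _ : η' ≤ η) le_rfl le_rfl (min_le_left _ _ : δ' ≤ δ)
    refine ⟨δ', lt_min hδ (lt_min hε hη'), (hΘ.mono le_rfl (min_le_right _ _) (min_le_right _ _)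
      le_rfl).extend ((min_le_right _ _).trans (min_le_right _ _)) fun l hlen hl => ?_⟩
    exact hΘ.exists_filling ((min_le_right _ _).trans (min_le_right _ _)) hη'r
      ((min_le_right _ _).trans (min_le_left _ _))
      (fun a => (hfill a).mono Subset.rfl (min_le_left _ _) Subset.rfl le_rfl) hlen hl

lemma exists_cycle_coloring (F E : Type*) [CommRing F] [Finite F] [NormedAddCommGroup E]
    [NormedSpace ℝ E] [ProperSpace E] [ChartedSpace E M] [CompactSpace M] (m : ℕ) :
    ∃ c : ℕ, ∀ ε > 0, ∃ δ > 0, ∃ κ : OrderedChain F M → Fin c,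
      ∀ z ∈ smallChains F univ m δ, ∀ z' ∈ smallChains F univ m δ, boundary z = 0 →
        boundary z' = 0 → κ z = κ z' → ∃ u ∈ smallChains F univ (m + 1) ε, boundary u = z - z' := by
  obtain ⟨η, hη, hΘ⟩ := exists_isSubdivision F E (M := M) (m + 1) 1 one_pos
  obtain ⟨t, -, ht, hcover⟩ :=
    (isCompact_univ (X := M)).finite_cover_balls (e := η / 3) (by positivity)
  have hclose (x : M) : ∃ y ∈ t, dist x y < η / 3 := by simpa using hcover (mem_univ x)
  choose ρ hρt hρ using hclose
  let netLists : Set (List M) := List.map Subtype.val '' {l : List t | l.length ≤ m}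
  have : Finite t := ht
  have : Finite netLists := ((List.finite_length_le t m).image _).to_subtype
  have hnet {z : OrderedChain F M} {δ : ℝ} (hz : z ∈ smallChains F univ m δ) :
      map ρ z ∈ supported F F netLists :=
    map_mem_supported (t := netLists) _ (fun l hl =>
      ⟨l.map fun x => ⟨ρ x, hρt x⟩, by simpa using hl.2.1, by simp [Function.comp_def]⟩) hz
  obtain ⟨c, ⟨encode⟩⟩ := Finite.exists_equiv_fin (netLists → F)
  refine ⟨c, fun ε hε => ?_⟩
  obtain ⟨δ, hδ, Θ, hΘ⟩ := hΘ ε hε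
  refine ⟨min δ (η / 3), by positivity, fun z => encode fun l => map ρ z l, ?_⟩
  intro z hz z' hz' hdz hdz' hκ
  have hmap : map ρ z = map ρ z' := by
    ext l
    by_cases hl : l ∈ netLists
    · exact congrFun (encode.injective hκ) ⟨l, hl⟩
    · rw [(mem_supported' F _).1 (hnet hz) l hl, (mem_supported' F _).1 (hnet hz') l hl]
  obtain ⟨u, hu, hdu⟩ := hΘ.exists_boundary_eq_apply_map_sub hη hρ hz hdz
  obtain ⟨u', hu', hdu'⟩ := hΘ.exists_boundary_eq_apply_map_sub hη hρ hz' hdz'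
  exact ⟨u' - u, Submodule.sub_mem _ hu' hu, by rw [map_sub, hdu, hdu', hmap]; abel⟩

end Subdivision

end OrderedChain

/-- An abelian group with a differential `d` and a commuting action `act` of `W`, filtered by
invariant subgroups. In `fil m ε`, the index `m` bounds the number of vertices of the simplices
and `ε` their size. -/
structure FilteredComplex (W : Type*) [AddCommGroup W] where
  Carrier : Type*
  [addCommGroup : AddCommGroup Carrier]
  d : Carrier →+ Carrier
  act : W → Carrier →+ Carrier
  fil : ℕ → ℝ → AddSubgroup Carrier
  d_d : ∀ x, d (d x) = 0
  d_act : ∀ g x, d (act g x) = act g (d x)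
  act_add : ∀ g h x, act (g + h) x = act g (act h x)
  act_zero : ∀ x, act 0 x = x
  act_mem : ∀ g {m ε x}, x ∈ fil m ε → act g x ∈ fil m ε
  fil_mono : ∀ {m ε ε'}, ε ≤ ε' → fil m ε ≤ fil m ε'

namespace FilteredComplex

attribute [instance] FilteredComplex.addCommGroup

variable {W : Type*} [AddCommGroup W] (X : FilteredComplex W)

/-- The cycles in `fil m δ`. -/
def cycles (m : ℕ) (δ : ℝ) : AddSubgroup X.Carrier := X.fil m δ ⊓ X.d.ker

/-- The cycles in `fil m δ` fall into at most `c` classes modulo boundaries of elements of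
`fil (m + 1) ε`. -/
def CyclesColorable (m c : ℕ) (δ ε : ℝ) : Prop :=
  ∃ κ : X.cycles m δ → Fin c, ∀ z z', κ z = κ z' →
    ∃ u ∈ X.fil (m + 1) ε, X.d u = (z : X.Carrier) - z'

/-- The mapping fibre of `t - 1`: an element `(a, b)` is a cycle when `a` is a cycle and `b`
bounds `t • a - a`. -/
def cone (t : W) : FilteredComplex W where
  Carrier := X.Carrier × X.Carrier
  d := AddMonoidHom.prod (-X.d.comp (AddMonoidHom.fst _ _))
    (X.d.comp (AddMonoidHom.snd _ _) -
      (X.act t - AddMonoidHom.id _).comp (AddMonoidHom.fst _ _))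
  act g := (X.act g).prodMap (X.act g)
  fil m ε := (X.fil m ε).prod (X.fil (m + 1) ε)
  d_d x := by ext <;> simp [X.d_d, X.d_act, neg_add_eq_sub]
  d_act g x := by ext <;> simp [X.d_act, ← X.act_add, add_comm]
  act_add g h x := by ext <;> simp [X.act_add]
  act_zero x := by ext <;> simp [X.act_zero]
  act_mem g _ _ _ hx := ⟨X.act_mem g hx.1, X.act_mem g hx.2⟩
  fil_mono h := AddSubgroup.prod_mono (X.fil_mono h) (X.fil_mono h)

/-- The iterated cone over the elements of a list, the head being the last cone taken. -/
def tower : List W → FilteredComplex W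
  | [] => X
  | t :: ts => (tower ts).cone t

/-- The number of cycle colours of a `j`-fold cone, in terms of those of the original complex. -/
def towerColors (c : ℕ → ℕ) : ℕ → ℕ → ℕ
  | 0, m => c m
  | j + 1, m => towerColors c j m * towerColors c j (m + 1)

/-- `X.IsLift x ts a` says that `a` is obtained from `x` by successively choosing, for each `t`
in `ts`, an element bounding the difference of the current element and its translate by `t`. -/
def IsLift (x : X.Carrier) : (ts : List W) → (X.tower ts).Carrier → Prop
  | [], a => a = x
  | t :: ts, a => IsLift x ts a.1 ∧ (X.tower ts).d a.2 = (X.tower ts).act t a.1 - a.1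

variable {X}

lemma mem_cycles {m : ℕ} {δ : ℝ} {z : X.Carrier} :
    z ∈ X.cycles m δ ↔ z ∈ X.fil m δ ∧ X.d z = 0 :=
  Iff.rfl

lemma cone_d_eq_iff {t : W} {x y : (X.cone t).Carrier} :
    (X.cone t).d x = y ↔ -X.d x.1 = y.1 ∧ X.d x.2 - (X.act t x.1 - x.1) = y.2 :=
  Prod.ext_iff

lemma mem_cycles_cone {t : W} {m : ℕ} {δ : ℝ} {z : (X.cone t).Carrier} :
    z ∈ (X.cone t).cycles m δ ↔
      z.1 ∈ X.cycles m δ ∧ z.2 ∈ X.fil (m + 1) δ ∧ X.d z.2 = X.act t z.1 - z.1 := by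
  rw [mem_cycles, cone_d_eq_iff, mem_cycles, ← neg_eq_zero, ← sub_eq_zero (a := X.d z.2)]
  exact and_and_and_comm

lemma cycles_mono {m : ℕ} {δ δ' : ℝ} (h : δ ≤ δ') : X.cycles m δ ≤ X.cycles m δ' :=
  inf_le_inf_right _ (X.fil_mono h)

lemma CyclesColorable.mono {m c : ℕ} {δ δ' ε : ℝ} (h : X.CyclesColorable m c δ ε)
    (hδ : δ' ≤ δ) : X.CyclesColorable m c δ' ε :=
  let ⟨κ, hκ⟩ := h
  ⟨fun z => κ (AddSubgroup.inclusion (cycles_mono hδ) z), fun _ _ h => hκ _ _ h⟩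

lemma CyclesColorable.cone {m c c' : ℕ} {δ ε₁ ε : ℝ} (h : X.CyclesColorable m c δ ε₁)
    (h' : X.CyclesColorable (m + 1) c' ε₁ ε) (hδ : δ ≤ ε₁) (hε : ε₁ ≤ ε) (t : W) :
    (X.cone t).CyclesColorable m (c * c') δ ε := by
  obtain ⟨κ, hκ⟩ := h
  obtain ⟨κ', hκ'⟩ := h'
  let color (z : (X.cone t).cycles m δ) : Fin c := κ ⟨z.1.1, (mem_cycles_cone.1 z.2).1⟩
  let rep (i : range color) : (X.cone t).cycles m δ := rangeSplitting color i
  have hbase (z : (X.cone t).cycles m δ) :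
      ∃ u ∈ X.fil (m + 1) ε₁, X.d u = z.1.1 - (rep ⟨color z, mem_range_self z⟩).1.1 :=
    hκ _ _ (apply_rangeSplitting color ⟨color z, mem_range_self z⟩).symm
  choose u hu hdu using hbase
  let residue (z : (X.cone t).cycles m δ) : X.cycles (m + 1) ε₁ :=
    ⟨z.1.2 - (rep ⟨color z, mem_range_self z⟩).1.2 - (X.act t (u z) - u z), by
      obtain ⟨-, hz, hdz⟩ := mem_cycles_cone.1 z.2
      obtain ⟨-, hr, hdr⟩ := mem_cycles_cone.1 (rep ⟨color z, mem_range_self z⟩).2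
      refine mem_cycles.2 ⟨sub_mem (sub_mem (X.fil_mono hδ hz) (X.fil_mono hδ hr))
        (sub_mem (X.act_mem t (hu z)) (hu z)), ?_⟩
      simp only [map_sub, X.d_act, hdz, hdr, hdu]
      abel⟩
  refine ⟨fun z => finProdFinEquiv (color z, κ' (residue z)), fun z z' hzz' => ?_⟩
  obtain ⟨hcolor, hres⟩ := Prod.mk.inj (finProdFinEquiv.injective hzz')
  obtain ⟨v, hv, hdv⟩ := hκ' _ _ hres
  refine ⟨(u z' - u z, v), ⟨X.fil_mono hε (sub_mem (hu z') (hu z)), hv⟩,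
    cone_d_eq_iff.2 ⟨?_, ?_⟩⟩
  · simp only [map_sub, neg_sub, hdu, hcolor]
    exact sub_sub_sub_cancel_right _ _ _
  · simp only [hdv, residue, hcolor, map_sub]
    change _ = z.1.2 - z'.1.2
    abel

lemma exists_cyclesColorable_tower {c : ℕ → ℕ}
    (hX : ∀ m, ∀ ε > 0, ∃ δ > 0, X.CyclesColorable m (c m) δ ε) (j m : ℕ) :
    ∀ ε > 0, ∃ δ > 0, ∀ ts : List W, ts.length = j →
      (X.tower ts).CyclesColorable m (towerColors c j m) δ ε := by
  induction j generalizing m with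
  | zero =>
    intro ε hε
    obtain ⟨δ, hδ, h⟩ := hX m ε hε
    refine ⟨δ, hδ, fun ts hts => ?_⟩
    obtain rfl := List.eq_nil_of_length_eq_zero hts
    exact h
  | succ j ih =>
    intro ε hε
    obtain ⟨ε₁, hε₁, h'⟩ := ih (m + 1) ε hε
    obtain ⟨δ, hδ, h⟩ := ih m (min ε₁ ε) (lt_min hε₁ hε)
    refine ⟨min δ (min ε₁ ε), lt_min hδ (lt_min hε₁ hε), fun ts hts => ?_⟩
    obtain ⟨t, ts, rfl⟩ := List.exists_cons_of_length_eq_add_one hts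
    replace hts : ts.length = j := Nat.succ_injective hts
    exact ((h ts hts).mono (min_le_left _ _)).cone ((h' ts hts).mono (min_le_left _ _))
      (min_le_right _ _) (min_le_right _ _) t

lemma CyclesColorable.exists_boundary_eq_act_sub [Finite W] {m c : ℕ} {δ ε : ℝ}
    (h : X.CyclesColorable m c δ ε) {a : X.Carrier} (ha : a ∈ X.fil m δ)
    (hda : ∀ g, X.act g (X.d a) = X.d a) (S : AddSubgroup W)
    (hS : Nat.card S * c < Nat.card W) :
    ∃ t ∉ S, ∃ b ∈ X.fil (m + 1) ε, X.d b = X.act t a - a := by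
  obtain ⟨κ, hκ⟩ := h
  let difference (g : W) : X.cycles m δ := ⟨X.act g a - a, mem_cycles.2
    ⟨sub_mem (X.act_mem g ha) ha, by rw [map_sub, X.d_act, hda, sub_self]⟩⟩
  obtain ⟨q, q', hne, hcolor⟩ : ∃ q q' : W ⧸ S, q ≠ q' ∧
      κ (difference q.out) = κ (difference q'.out) := by
    have := Fintype.ofFinite (W ⧸ S)
    refine Fintype.exists_ne_map_eq_of_card_lt (fun q : W ⧸ S => κ (difference q.out)) ?_
    rw [Fintype.card_fin, ← Nat.card_eq_fintype_card]
    rw [S.card_eq_card_quotient_mul_card_addSubgroup, mul_comm] at hS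
    exact lt_of_mul_lt_mul_right' hS
  obtain ⟨u, hu, hdu⟩ := hκ _ _ hcolor
  refine ⟨-q'.out + q.out, fun hmem => hne ?_, X.act (-q'.out) u, X.act_mem _ hu, ?_⟩
  · rw [← q.out_eq', ← q'.out_eq', eq_comm]
    exact QuotientAddGroup.eq.2 hmem
  · rw [X.d_act, hdu, sub_sub_sub_cancel_right, map_sub, ← X.act_add, ← X.act_add,
      neg_add_cancel, X.act_zero]

lemma IsLift.act_d {x : X.Carrier} (hx : ∀ g, X.act g (X.d x) = X.d x) :
    ∀ {ts : List W} {a : (X.tower ts).Carrier}, X.IsLift x ts a →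
      ∀ g, (X.tower ts).act g ((X.tower ts).d a) = (X.tower ts).d a
  | [], _, rfl, g => hx g
  | t :: ts, a, ⟨h, hd⟩, g => by
    refine Prod.ext ((map_neg _ _).trans (congrArg _ (h.act_d hx g))) ?_
    change (X.tower ts).act g ((X.tower ts).d a.2 - ((X.tower ts).act t a.1 - a.1)) =
      (X.tower ts).d a.2 - ((X.tower ts).act t a.1 - a.1)
    rw [hd, sub_self, map_zero]

variable (X) in
/-- The projection of an iterated cone to the second component of its last, second component of
its last but one cone, and so on. -/
def top : (ts : List W) → (X.tower ts).Carrier →+ X.Carrier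
  | [] => AddMonoidHom.id _
  | _ :: ts => (top ts).comp (AddMonoidHom.snd _ _)

lemma top_act (g : W) : ∀ {ts : List W} (a : (X.tower ts).Carrier),
    X.top ts ((X.tower ts).act g a) = X.act g (X.top ts a)
  | [], _ => rfl
  | _ :: _, a => top_act g a.2

lemma top_mem {ε : ℝ} : ∀ {ts : List W} {m : ℕ} {a : (X.tower ts).Carrier},
    a ∈ (X.tower ts).fil m ε → X.top ts a ∈ X.fil (m + ts.length) ε
  | [], _, _, ha => ha
  | _ :: ts, m, _, ha => by
    rw [List.length_cons, ← Nat.succ_add_eq_add_succ]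
    exact top_mem ha.2

lemma apply_top_d {A : Type*} [AddCommGroup A] {ν : X.Carrier →+ A} :
    ∀ {ts : List W} (_ : ∀ t ∈ ts, ∀ x, ν (X.act t x) = ν x) (a : (X.tower ts).Carrier),
      ν (X.top ts ((X.tower ts).d a)) = ν (X.d (X.top ts a))
  | [], _, _ => rfl
  | t :: ts, hν, a => by
    obtain ⟨ht, hν⟩ := List.forall_mem_cons.1 hν
    change ν (X.top ts ((X.tower ts).d a.2 - ((X.tower ts).act t a.1 - a.1))) =
      ν (X.d (X.top ts a.2))
    rw [map_sub, map_sub, map_sub, map_sub, top_act, ht, sub_self, sub_zero, apply_top_d hν]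

lemma IsLift.apply_d_top {A : Type*} [AddCommGroup A] {ν : X.Carrier →+ A} {t : W} {ts : List W}
    (hν : ∀ t ∈ ts, ∀ x, ν (X.act t x) = ν x) {x : X.Carrier} {a : (X.tower (t :: ts)).Carrier}
    (ha : X.IsLift x (t :: ts) a) :
    ν (X.d (X.top (t :: ts) a)) = ν (X.act t (X.top ts a.1)) - ν (X.top ts a.1) := by
  change ν (X.d (X.top ts a.2)) = _
  rw [← apply_top_d hν, ha.2, map_sub, map_sub, top_act]

end FilteredComplex

section Triangular

variable {K V : Type*} [Field K] [AddCommGroup V] [Module K V]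

/-- Each functional in the list is nonzero on its own vector and vanishes on those of the later
pairs. -/
def IsTriangular (s : List (V × (V →ₗ[K] K))) : Prop :=
  s.Pairwise (fun p q => p.2 q.1 = 0) ∧ ∀ p ∈ s, p.2 p.1 ≠ 0

lemma IsTriangular.exists_cons {s : List (V × (V →ₗ[K] K))} (hs : IsTriangular s) {t : V}
    (ht : t ∉ Submodule.span K {v | v ∈ s.map Prod.fst}) :
    ∃ χ : V →ₗ[K] K, IsTriangular ((t, χ) :: s) := by
  obtain ⟨χ, hχt, hχ⟩ := Submodule.exists_le_ker_of_notMem ht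
  exact ⟨χ, List.pairwise_cons.2 ⟨fun q hq => hχ (Submodule.subset_span (List.mem_map_of_mem hq)),
    hs.1⟩, List.forall_mem_cons.2 ⟨hχt, hs.2⟩⟩

lemma natCard_span_list_le [Finite K] (l : List V) :
    Nat.card (Submodule.span K {v | v ∈ l}) ≤ Nat.card K ^ l.length := by
  classical
  have hl : {v | v ∈ l} = (l.toFinset : Set V) := by ext; simp
  have : Module.Finite K (Submodule.span K {v | v ∈ l}) := by
    rw [hl]; infer_instance
  rw [Module.natCard_eq_pow_finrank (K := K)]
  refine Nat.pow_le_pow_right Nat.card_pos ?_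
  rw [hl]
  exact (finrank_span_finset_le_card _).trans l.toFinset_card_le

end Triangular

namespace FilteredComplex

variable {W : Type*} [AddCommGroup W] {X : FilteredComplex W}

lemma exists_isLift (K : Type*) [Field K] [Finite K] [Module K W] [Finite W] {c : ℕ → ℕ}
    (hX : ∀ m, ∀ ε > 0, ∃ δ > 0, X.CyclesColorable m (c m) δ ε) {x : X.Carrier} {m : ℕ}
    (hx : ∀ ε > 0, x ∈ X.fil m ε) (hdx : ∀ g, X.act g (X.d x) = X.d x) (r : ℕ)
    (hr : ∀ j < r, Nat.card K ^ j * towerColors c j m < Nat.card W) :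
    ∀ ε > 0, ∃ s : List (W × (W →ₗ[K] K)), s.length = r ∧ IsTriangular s ∧
      ∃ a ∈ (X.tower (s.map Prod.fst)).fil m ε, X.IsLift x (s.map Prod.fst) a := by
  induction r with
  | zero => exact fun ε hε => ⟨[], rfl, ⟨List.Pairwise.nil, by simp⟩, x, hx ε hε, rfl⟩
  | succ r ih =>
    intro ε hε
    obtain ⟨δ, hδ, hcol⟩ := exists_cyclesColorable_tower hX r m ε hε
    obtain ⟨s, hlen, hs, a, ha, hlift⟩ :=
      ih (fun j hj => hr j (hj.trans r.lt_succ_self)) (min δ ε) (lt_min hδ hε)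
    have hcard := (Nat.mul_le_mul_right (towerColors c r m)
      (natCard_span_list_le (K := K) (s.map Prod.fst))).trans_lt
        (by simpa [hlen] using hr r r.lt_succ_self)
    obtain ⟨t, ht, b, hb, hdb⟩ := (hcol _ (by simpa using hlen)).exists_boundary_eq_act_sub
      ((X.tower _).fil_mono (min_le_left _ _) ha) (hlift.act_d hdx)
      (Submodule.span K {v | v ∈ s.map Prod.fst}).toAddSubgroup hcard
    obtain ⟨χ, hχ⟩ := hs.exists_cons ht
    exact ⟨(t, χ) :: s, by simp [hlen], hχ, (a, b),
      ⟨(X.tower _).fil_mono (min_le_right _ _) ha, hb⟩, hlift, hdb⟩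

end FilteredComplex

namespace OrderedChain

variable (F W M : Type*) [CommRing F] [AddCommGroup W] [PseudoMetricSpace M] [AddAction W M]

variable {M} in
/-- The lists all of whose translates are `ε`-small, a `W`-invariant version of `smallLists`. -/
def stablySmallLists (m : ℕ) (ε : ℝ) : Set (List M) :=
  {l | ∀ g : W, l.map (g +ᵥ ·) ∈ smallLists univ m ε}

/-- Ordered chains with the action of `W` by translations, filtered by the number of points and the
diameters of the translates of the simplices. -/
noncomputable def orderedComplex : FilteredComplex W where
  Carrier := OrderedChain F M
  d := (boundary : OrderedChain F M →ₗ[F] OrderedChain F M).toAddMonoidHom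
  act g := (map (g +ᵥ ·) : OrderedChain F M →ₗ[F] OrderedChain F M).toAddMonoidHom
  fil m ε := (supported F F (stablySmallLists W m ε)).toAddSubgroup
  d_d := boundary_boundary
  d_act g := boundary_map (g +ᵥ ·)
  act_add g h x := by
    simp only [LinearMap.toAddMonoidHom_coe, map_map, Function.comp_def, add_vadd]
  act_zero x := by
    simp only [LinearMap.toAddMonoidHom_coe, zero_vadd]
    exact map_id x
  act_mem g m ε _ hx := map_mem_supported (t := stablySmallLists W m ε) _ (fun l hl h => by
    simpa [Function.comp_def, add_vadd] using hl (h + g)) hx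
  fil_mono h :=
    supported_mono (M := F) (R := F) fun _ hl g => smallLists_mono Subset.rfl le_rfl h (hl g)

variable {F W M}

lemma stablySmallLists_subset_smallLists {m : ℕ} {ε : ℝ} :
    (stablySmallLists W m ε : Set (List M)) ⊆ smallLists univ m ε :=
  fun _ hl => by simpa using hl 0

lemma single_singleton_mem_fil (x : M) {ε : ℝ} (hε : 0 < ε) :
    single [x] 1 ∈ (orderedComplex F W M).fil 1 ε :=
  single_mem_supported F _ fun g => by simpa [smallLists] using hε

lemma act_d_single_singleton (x : M) (g : W) :
    (orderedComplex F W M).act g ((orderedComplex F W M).d (single [x] 1)) =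
      (orderedComplex F W M).d (single [x] 1) := by
  change map _ (boundary (single [x] (1 : F))) = boundary (single [x] 1)
  simp [boundary_single, listBoundary]

variable (W M) in
lemma exists_smallLists_subset_stablySmallLists [CompactSpace M] [Finite W]
    [ContinuousConstVAdd W M] (m : ℕ) {ε : ℝ} (hε : 0 < ε) :
    ∃ δ > 0, (smallLists univ m δ : Set (List M)) ⊆ stablySmallLists W m ε := by
  have hunif (g : W) : ∃ δ > 0, ∀ x y : M, dist x y < δ → dist (g +ᵥ x) (g +ᵥ y) < ε := by
    have := Metric.uniformContinuous_iff.1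
      (CompactSpace.uniformContinuous_of_continuous (continuous_const_vadd (T := M) g)) ε hε
    simpa using this
  choose δ hδ hunif using hunif
  obtain ⟨δ₀, hδ₀, hδ₀pos⟩ : ∃ δ₀, (∀ g, δ₀ ≤ δ g) ∧ 0 < δ₀ :=
    ((Filter.eventually_all.2 fun g => nhdsWithin_le_nhds (eventually_le_nhds (hδ g))).and
      (self_mem_nhdsWithin (s := Ioi (0 : ℝ)) (a := 0))).exists
  exact ⟨δ₀, hδ₀pos, fun l hl g => map_mem_smallLists (mapsTo_univ _ _)
    (fun x _ y _ h => hunif g x y (h.trans_le (hδ₀ g))) hl⟩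

lemma exists_cyclesColorable_orderedComplex.{w} (F E : Type*) [CommRing F] [Finite F]
    [NormedAddCommGroup E] [NormedSpace ℝ E] [ProperSpace E] [ChartedSpace E M] [CompactSpace M]
    (m : ℕ) :
    ∃ c : ℕ, ∀ (W : Type w) [AddCommGroup W] [Finite W] [AddAction W M] [ContinuousConstVAdd W M],
      ∀ ε > 0, ∃ δ > 0, (orderedComplex F W M).CyclesColorable m c δ ε := by
  obtain ⟨c, hc⟩ := exists_cycle_coloring F E (M := M) m
  refine ⟨c, fun W _ _ _ _ ε hε => ?_⟩
  obtain ⟨ε', hε', hsub⟩ := exists_smallLists_subset_stablySmallLists W M (m + 1) hε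
  obtain ⟨δ, hδ, κ, hκ⟩ := hc ε' hε'
  have hsmall (z : (orderedComplex F W M).cycles m δ) : z.1 ∈ smallChains F univ m δ :=
    supported_mono stablySmallLists_subset_smallLists z.2.1
  refine ⟨δ, hδ, fun z => κ z.1, fun z z' hzz' => ?_⟩
  obtain ⟨u, hu, hdu⟩ := hκ _ (hsmall z) _ (hsmall z') z.2.2 z'.2.2 hzz'
  exact ⟨u, supported_mono hsub hu, hdu⟩

end OrderedChain

namespace OrderedChain

variable {F W M : Type*} [CommRing F]

/-- The iterated cup product, on a list of points, of the coboundaries of the functions in the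
first argument. -/
def listCup : List (M → F) → List M → F
  | [], [_] => 1
  | θ :: θs, x :: y :: l => (θ y - θ x) * listCup θs (y :: l)
  | _, _ => 0

/-- The linear extension of `listCup` to ordered chains. -/
noncomputable def cup (θs : List (M → F)) : OrderedChain F M →ₗ[F] F :=
  Finsupp.linearCombination F (listCup θs)

/-- The cup product with a function `θ` in degree zero; its coboundary is `cup (θ :: θs)`. -/
noncomputable def weightedCup (θ : M → F) (θs : List (M → F)) : OrderedChain F M →ₗ[F] F :=
  Finsupp.linearCombination F fun l => l.head?.elim 0 θ * listCup θs l

@[simp] lemma listCup_nil_right (θs : List (M → F)) : listCup θs [] = 0 := by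
  cases θs <;> rfl

lemma cup_single (θs : List (M → F)) (l : List M) : cup θs (single l 1) = listCup θs l := by
  simp [cup]

lemma weightedCup_single (θ : M → F) (θs : List (M → F)) (l : List M) :
    weightedCup θ θs (single l 1) = l.head?.elim 0 θ * listCup θs l := by
  simp [weightedCup]

lemma weightedCup_cons (θ : M → F) (θs : List (M → F)) (x : M) (v : OrderedChain F M) :
    weightedCup θ θs (cons x v) = θ x * cup θs (cons x v) := by
  have h : weightedCup θ θs ∘ₗ cons x = θ x • (cup θs ∘ₗ cons x) :=
    linearMap_ext_single fun l => by simp [weightedCup_single, cup_single]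
  exact LinearMap.congr_fun h v

lemma cup_nil_cons_cons (x y : M) (v : OrderedChain F M) : cup [] (cons x (cons y v)) = 0 := by
  have h : cup [] ∘ₗ cons x ∘ₗ cons y = (0 : OrderedChain F M →ₗ[F] F) :=
    linearMap_ext_single fun l => by simp [cup_single, listCup]
  exact LinearMap.congr_fun h v

lemma weightedCup_boundary {θ : M → F} {θs : List (M → F)}
    (hθs : ∀ v, cup θs (boundary v) = 0) (v : OrderedChain F M) :
    weightedCup θ θs (boundary v) = cup (θ :: θs) v := by
  have h : weightedCup θ θs ∘ₗ boundary = cup (θ :: θs) := by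
    refine linearMap_ext_single fun l => ?_
    rw [LinearMap.comp_apply, cup_single]
    match l with
    | [] => simp
    | [x] => simp [boundary_single, listBoundary, weightedCup_single, listCup]
    | x :: y :: l =>
      have hcons : cup θs (cons x (boundary (single (y :: l) 1))) = listCup θs (y :: l) := by
        rw [← cup_single, ← sub_eq_zero, ← neg_sub, neg_eq_zero, ← map_sub, ← boundary_cons, hθs]
      rw [← cons_single x (y :: l), boundary_cons, map_sub, weightedCup_cons, hcons,
        weightedCup_single, listCup]
      exact (sub_mul _ _ _).symm
  exact LinearMap.congr_fun h v

lemma cup_boundary : ∀ (θs : List (M → F)) (v : OrderedChain F M), cup θs (boundary v) = 0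
  | [], v => by
    have h : cup [] ∘ₗ boundary = (0 : OrderedChain F M →ₗ[F] F) := by
      refine linearMap_ext_single fun l => ?_
      match l with
      | [] | [x] | [x, y] => simp [boundary_single, listBoundary, cup_single, listCup]
      | x :: y :: z :: l =>
        simp [boundary_single, listBoundary, cup_single, listCup, cup_nil_cons_cons]
    exact LinearMap.congr_fun h v
  | θ :: θs, v => by
    rw [← weightedCup_boundary (cup_boundary θs), boundary_boundary, map_zero]

lemma listCup_map {f : M → M} {θs : List (M → F)} (h : ∀ θ ∈ θs, ∃ c, ∀ x, θ (f x) = c + θ x) :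
    ∀ l : List M, listCup θs (l.map f) = listCup θs l := by
  induction θs with
  | nil => rintro (_ | ⟨x, _ | ⟨y, l⟩⟩) <;> rfl
  | cons θ θs ih =>
    obtain ⟨⟨c, hc⟩, hθs⟩ := List.forall_mem_cons.1 h
    rintro (_ | ⟨x, _ | ⟨y, l⟩⟩)
    · rfl
    · rfl
    · have hl := ih hθs (y :: l)
      simp only [List.map_cons, listCup] at hl ⊢
      rw [hl, hc, hc, add_sub_add_left_eq_sub]

lemma weightedCup_map {f : M → M} {θ : M → F} {c : F} (hθ : ∀ x, θ (f x) = c + θ x)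
    {θs : List (M → F)} (h : ∀ θ ∈ θs, ∃ c, ∀ x, θ (f x) = c + θ x) (v : OrderedChain F M) :
    weightedCup θ θs (map f v) = c * cup θs v + weightedCup θ θs v := by
  have h : weightedCup θ θs ∘ₗ map f = c • cup θs + weightedCup θ θs := by
    refine linearMap_ext_single fun l => ?_
    simp only [LinearMap.comp_apply, LinearMap.add_apply, LinearMap.smul_apply, map_single,
      weightedCup_single, cup_single, listCup_map h]
    cases l with
    | nil => simp
    | cons x l => simp [hθ, add_mul]
  exact LinearMap.congr_fun h v

lemma listCup_eq_zero {θs : List (M → F)} {l : List M}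
    (h : ∃ θ ∈ θs, ∀ x ∈ l, ∀ y ∈ l, θ x = θ y) : listCup θs l = 0 := by
  induction θs generalizing l with
  | nil => simp at h
  | cons θ θs ih =>
    match l with
    | [] | [x] => rfl
    | x :: y :: l =>
      obtain ⟨θ', hθ', hconst⟩ := h
      rw [listCup]
      rcases List.mem_cons.1 hθ' with rfl | hθ'
      · rw [hconst y (by simp) x (by simp), sub_self, zero_mul]
      · rw [ih ⟨θ', hθ', fun a ha b hb => hconst a (List.mem_cons_of_mem x ha) b
          (List.mem_cons_of_mem x hb)⟩, mul_zero]

lemma cup_eq_zero {θs : List (M → F)} {A : Set (List M)}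
    (h : ∀ l ∈ A, ∃ θ ∈ θs, ∀ x ∈ l, ∀ y ∈ l, θ x = θ y) {v : OrderedChain F M}
    (hv : v ∈ supported F F A) : cup θs v = 0 :=
  eq_of_mem_supported (g := 0) hv fun l hl => (cup_single θs l).trans (listCup_eq_zero (h l hl))

section Lift

variable {K : Type*} [Field K] [AddCommGroup W] [Module K W] [PseudoMetricSpace M] [AddAction W M]

lemma cup_top_cons {t : W} {ts : List W} {χ : W →ₗ[K] K} {θ : M → K} {θs : List (M → K)}
    (hχ : ∀ u ∈ ts, χ u = 0) (hθ : ∀ g x, θ (g +ᵥ x) = χ g + θ x)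
    (hθs : ∀ g : W, ∀ θ ∈ θs, ∃ c, ∀ x, θ (g +ᵥ x) = c + θ x) {x : OrderedChain K M}
    {a : ((orderedComplex K W M).tower (t :: ts)).Carrier}
    (ha : (orderedComplex K W M).IsLift x (t :: ts) a) :
    cup (θ :: θs) ((orderedComplex K W M).top (t :: ts) a) =
      χ t * cup θs ((orderedComplex K W M).top ts a.1) := by
  have hact (g : W) (v : OrderedChain K M) :
      weightedCup θ θs ((orderedComplex K W M).act g v) = χ g * cup θs v + weightedCup θ θs v :=
    weightedCup_map (hθ g) (hθs g) v
  have hinv : ∀ u ∈ ts, ∀ v : OrderedChain K M,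
      weightedCup θ θs ((orderedComplex K W M).act u v) = weightedCup θ θs v := fun u hu v => by
    rw [hact, hχ u hu, zero_mul, zero_add]
  calc
    _ = weightedCup θ θs (boundary ((orderedComplex K W M).top (t :: ts) a)) :=
      (weightedCup_boundary (cup_boundary θs) _).symm
    _ = weightedCup θ θs ((orderedComplex K W M).act t ((orderedComplex K W M).top ts a.1)) -
        weightedCup θ θs ((orderedComplex K W M).top ts a.1) :=
      ha.apply_d_top (ν := (weightedCup θ θs).toAddMonoidHom) hinv
    _ = _ := sub_eq_of_eq_add (hact t _)

lemma cup_top_ne_zero {x : M} {s : List (W × (W →ₗ[K] K))} {θs : List (M → K)}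
    (hθ : List.Forall₂ (fun p θ => ∀ g x, θ (g +ᵥ x) = p.2 g + θ x) s θs) (hs : IsTriangular s)
    {a : ((orderedComplex K W M).tower (s.map Prod.fst)).Carrier}
    (ha : (orderedComplex K W M).IsLift (single [x] 1) (s.map Prod.fst) a) :
    cup θs ((orderedComplex K W M).top (s.map Prod.fst) a) ≠ 0 := by
  have hθs (g : W) : ∀ θ ∈ θs, ∃ c, ∀ x, θ (g +ᵥ x) = c + θ x := by
    clear hs ha a
    induction hθ with
    | nil => simp
    | cons hθ _ ih => exact List.forall_mem_cons.2 ⟨⟨_, hθ g⟩, ih⟩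
  induction hθ with
  | nil =>
    obtain rfl : a = single [x] 1 := ha
    refine ne_of_eq_of_ne (cup_single [] [x]) one_ne_zero
  | cons hθ _ ih =>
    obtain ⟨hpair, hne⟩ := hs
    obtain ⟨hχ, hpair⟩ := List.pairwise_cons.1 hpair
    obtain ⟨hχ_ne, hne⟩ := List.forall_mem_cons.1 hne
    have hθs' (g : W) := (List.forall_mem_cons.1 (hθs g)).2
    exact ne_of_eq_of_ne (cup_top_cons (List.forall_mem_map.2 hχ) hθ hθs' ha)
      (mul_ne_zero hχ_ne (ih ⟨hpair, hne⟩ ha.1 hθs'))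

end Lift

end OrderedChain

namespace OrderedChain

variable {K W M : Type*} [Field K] [Finite K] [AddCommGroup W] [Module K W] [Finite W]
  [PseudoMetricSpace M] [AddAction W M]

lemma exists_constantOn_ball {ι α : Type*} [CompactSpace M] {φ : ι → M → α}
    (hφ : ∀ x, ∃ i, ∀ᶠ y in 𝓝 x, φ i y = φ i x) :
    ∃ ε > 0, ∀ x, ∃ i, ∀ y ∈ Metric.ball x ε, ∀ z ∈ Metric.ball x ε, φ i y = φ i z := by
  obtain ⟨ε, hε, h⟩ := lebesgue_number_lemma_of_metric_sUnion isCompact_univ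
    (c := {U : Set M | IsOpen U ∧ ∃ i, ∀ y ∈ U, ∀ z ∈ U, φ i y = φ i z}) (fun U hU => hU.1)
    fun x _ => by
      obtain ⟨i, hi⟩ := hφ x
      obtain ⟨U, hU, hUo, hxU⟩ := eventually_nhds_iff.1 hi
      exact ⟨U, ⟨hUo, i, fun y hy z hz => (hU y hy).trans (hU z hz).symm⟩, hxU⟩
  refine ⟨ε, hε, fun x => ?_⟩
  obtain ⟨U, ⟨-, i, hi⟩, hxU⟩ := h x (mem_univ x)
  exact ⟨i, fun y hy z hz => hi y (hxU hy) z (hxU hz)⟩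

theorem exists_natCard_le_towerColors [CompactSpace M] [Nonempty M] {c : ℕ → ℕ}
    (hc : ∀ m, ∀ ε > 0, ∃ δ > 0, (orderedComplex K W M).CyclesColorable m (c m) δ ε) {r : ℕ}
    {φ : Fin r → M → W} (hφ : ∀ i g x, φ i (g +ᵥ x) = g + φ i x)
    (hconst : ∀ x, ∃ i, ∀ᶠ y in 𝓝 x, φ i y = φ i x) :
    ∃ j < r, Nat.card W ≤ Nat.card K ^ j * FilteredComplex.towerColors c j 1 := by
  by_contra! hr
  obtain ⟨x⟩ := ‹Nonempty M›
  obtain ⟨ε, hε, hball⟩ := exists_constantOn_ball hconst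
  obtain ⟨s, rfl, hs, a, ha, hlift⟩ := FilteredComplex.exists_isLift K hc
    (fun ε hε => single_singleton_mem_fil x hε) (act_d_single_singleton x) r hr ε hε
  let θs : List (M → K) := List.ofFn fun i x => (s.get i).2 (φ i x)
  have hθs : List.Forall₂ (fun p θ => ∀ g x, θ (g +ᵥ x) = p.2 g + θ x) s θs := by
    refine List.forall₂_iff_get.2 ⟨by simp [θs], fun i hi hi' g x => ?_⟩
    simp [θs, hφ]
  refine cup_top_ne_zero hθs hs hlift (cup_eq_zero (fun l hl => ?_) (FilteredComplex.top_mem ha))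
  obtain ⟨y, hy⟩ : ∃ y, ∀ z ∈ l, z ∈ Metric.ball y ε := by
    have hsmall := (stablySmallLists_subset_smallLists hl).2.2
    cases l with
    | nil => exact ⟨x, by simp⟩
    | cons y l => exact ⟨y, fun z hz => hsmall z hz y List.mem_cons_self⟩
  obtain ⟨i, hi⟩ := hball y
  exact ⟨_, (List.mem_ofFn' _ _).2 ⟨i, rfl⟩, fun z hz w hw =>
    congrArg (s.get i).2 (hi z (hy z hz) w (hy w hw))⟩

theorem exists_natCard_le_of_free.{w} (K : Type*) [Field K] [Finite K] {M : Type*} [MetricSpace M]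
    [CompactSpace M] [Nonempty M] {n : ℕ} [ChartedSpace (EuclideanSpace ℝ (Fin n)) M] :
    ∃ N : ℕ, ∀ (W : Type w) [AddCommGroup W] [Finite W] [Module K W] [AddAction W M]
      [ContinuousConstVAdd W M] [IsCancelVAdd W M], Nat.card W ≤ N := by
  choose c hc using exists_cyclesColorable_orderedComplex (M := M) K (EuclideanSpace ℝ (Fin n))
  refine ⟨∑ j ∈ Finset.range (2 ^ n), Nat.card K ^ j * FilteredComplex.towerColors c j 1,
    fun W _ _ _ _ _ _ => ?_⟩
  obtain ⟨φ, hφ, hconst⟩ := exists_equivariant_locallyConstant (n := n) (W := W) (M := M)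
  obtain ⟨j, hj, hW⟩ := exists_natCard_le_towerColors (K := K) (fun m => hc m W) hφ hconst
  exact hW.trans (Finset.single_le_sum (f := fun j => Nat.card K ^ j *
    FilteredComplex.towerColors c j 1) (fun _ _ => Nat.zero_le _) (Finset.mem_range.2 hj))

end OrderedChain

/-- The additive action of `W` on `M` corresponding to a homomorphism from `W`, written
multiplicatively, to the homeomorphism group of `M`. -/
abbrev addActionOfHom {W M : Type*} [AddGroup W] [TopologicalSpace M]
    (ρ : Multiplicative W →* (M ≃ₜ M)) : AddAction W M where
  vadd g x := ρ (.ofAdd g) x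
  zero_vadd x := congrArg (· x) (map_one ρ)
  add_vadd g h x := congrArg (· x) (map_mul ρ (.ofAdd g) (.ofAdd h))

/-- **Weinberger's theorem.** For every prime `p` and every nonempty compact
topological manifold `M`, there is `k` such that `(ℤ/pℤ)^k` admits no free action
on `M` by homeomorphisms. -/
theorem no_free_elementary_abelian_action {p : ℕ} (hp : p.Prime) {n : ℕ}
    {M : Type*} [TopologicalSpace M] [T2Space M] [SecondCountableTopology M]
    [ChartedSpace (EuclideanSpace ℝ (Fin n)) M] [CompactSpace M] [Nonempty M] :
    ∃ k : ℕ, ¬ ∃ ρ : Multiplicative (Fin k → ZMod p) →* (M ≃ₜ M),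
      ∀ g : Multiplicative (Fin k → ZMod p), g ≠ 1 → ∀ x : M, ρ g x ≠ x := by
  have := Fact.mk hp
  let := TopologicalSpace.metrizableSpaceMetric M
  obtain ⟨N, hN⟩ := OrderedChain.exists_natCard_le_of_free (ZMod p) (M := M) (n := n)
  refine ⟨N, fun ⟨ρ, hρ⟩ => ?_⟩
  let := addActionOfHom ρ
  have : ContinuousConstVAdd (Fin N → ZMod p) M := ⟨fun g => (ρ (.ofAdd g)).continuous⟩
  have : IsCancelVAdd (Fin N → ZMod p) M :=
    isCancelVAdd_iff_eq_zero_of_vadd_eq.2 fun g x hgx =>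
      by_contra fun hg => hρ (.ofAdd g) (mt ofAdd_eq_one.1 hg) x hgx
  refine (hN (Fin N → ZMod p)).not_gt ?_
  simpa using Nat.lt_pow_self hp.one_lt
end

section
/- Let G be a subgroup of the group of self-homeomorphisms of the circle S¹ such that there exists a natural number N with g^(2^N) = 1 for every g ∈ G. Then G is finite. -/
open Function Set Real

theorem orderIso_coe_pow {α : Type*} [LE α] (F : α ≃o α) (n : ℕ) : ⇑(F ^ n) = F^[n] :=
  hom_coe_pow _ rfl (fun _ _ => rfl) F n

section Preorder

variable {α : Type*} [Preorder α] {F K T : α ≃o α} {n : ℕ}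

theorem pow_apply_lt_pow_apply (hFK : ∀ z, F z < K z) (hn : n ≠ 0) (x : α) :
    (F ^ n) x < (K ^ n) x := by
  simp only [orderIso_coe_pow]
  refine K.monotone.seq_pos_lt_seq_of_lt_of_le (x := fun m => F^[m] x) (y := fun m => K^[m] x)
    (Nat.pos_of_ne_zero hn) le_rfl (fun m _ => ?_) (fun m _ => ?_)
  · simpa only [iterate_succ_apply'] using hFK _
  · simp only [iterate_succ_apply', le_refl]

theorem strictMono_zpow_apply (hT : ∀ z, z < T z) (x : α) : StrictMono fun k : ℤ => (T ^ k) x :=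
  strictMono_int_of_lt_succ fun k => by
    simpa only [zpow_add_one, RelIso.mul_apply] using (T ^ k).strictMono (hT x)

end Preorder

section LinearOrder

variable {α : Type*} [LinearOrder α] {F K T : α ≃o α} {H : Subgroup (α ≃o α)} {n : ℕ} {x : α}

theorem lt_pow_apply_iff (hn : n ≠ 0) : x < (F ^ n) x ↔ x < F x := by
  simpa [orderIso_coe_pow] using
    (Commute.id_left (f := F)).iterate_pos_lt_iff_map_lt monotone_id F.strictMono
      (x := x) (Nat.pos_of_ne_zero hn)

theorem lt_apply_iff_of_pow_eq_zpow (hT : ∀ z, z < T z) (hn : n ≠ 0) {k : ℤ} (hF : F ^ n = T ^ k) :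
    x < F x ↔ 0 < k :=
  calc
    x < F x ↔ (T ^ (0 : ℤ)) x < (T ^ k) x := by
      rw [← hF, zpow_zero, RelIso.one_apply, lt_pow_apply_iff hn]
    _ ↔ 0 < k := (strictMono_zpow_apply hT x).lt_iff_lt

theorem apply_lt_apply_iff_of_pow_mem_zpowers (hT : ∀ z, z < T z) (hn : n ≠ 0)
    (hH : ∀ E ∈ H, E ^ n ∈ Subgroup.zpowers T) (hF : F ∈ H) (hK : K ∈ H) (x y : α) :
    F x < K x ↔ F y < K y := by
  obtain ⟨k, hk⟩ := hH _ (H.mul_mem (H.inv_mem hF) hK)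
  have lt_iff (z : α) : F z < K z ↔ 0 < k := by
    rw [← lt_apply_iff_of_pow_eq_zpow (x := z) hT hn hk.symm, RelIso.mul_apply,
      ← F.lt_iff_lt (x := z), RelIso.apply_inv_self]
  rw [lt_iff x, lt_iff y]

theorem pow_left_injOn_of_pow_mem_zpowers (hT : ∀ z, z < T z) (hn : n ≠ 0)
    (hH : ∀ E ∈ H, E ^ n ∈ Subgroup.zpowers T) : InjOn (fun F : α ≃o α => F ^ n) H := by
  have not_lt {F K : α ≃o α} (hF : F ∈ H) (hK : K ∈ H) (hpow : F ^ n = K ^ n) (x : α) :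
      ¬ F x < K x := fun hlt =>
    (pow_apply_lt_pow_apply
      (fun z => (apply_lt_apply_iff_of_pow_mem_zpowers hT hn hH hF hK x z).1 hlt) hn x).ne
      (DFunLike.congr_fun hpow x)
  intro F hF K hK hpow
  ext x
  exact le_antisymm (le_of_not_gt (not_lt hK hF hpow.symm x)) (le_of_not_gt (not_lt hF hK hpow x))

theorem finite_setOf_apply_mem_Ico_of_pow_mem_zpowers (hT : ∀ z, z < T z) (hTH : T ∈ H)
    (hn : n ≠ 0) (hH : ∀ F ∈ H, F ^ n ∈ Subgroup.zpowers T) (x : α) :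
    {F ∈ H | F x ∈ Ico x (T x)}.Finite := by
  refine Finite.of_injOn (f := (· ^ n)) (t := (T ^ ·) '' Ico (0 : ℤ) n) ?_
    ((pow_left_injOn_of_pow_mem_zpowers hT hn hH).mono fun F hF => hF.1) ((finite_Ico _ _).image _)
  rintro F ⟨hF, hxF, hFT⟩
  obtain ⟨k, hk : T ^ k = F ^ n⟩ := hH F hF
  have k_nonneg : 0 ≤ k := by
    have : x ≤ (F ^ n) x := by
      simpa only [orderIso_coe_pow, iterate_zero, id] using
        F.monotone.monotone_iterate_of_le_map hxF n.zero_le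
    rw [← (strictMono_zpow_apply hT x).le_iff_le]
    simpa [hk] using this
  have k_lt : k < n := by
    rw [← (strictMono_zpow_apply hT x).lt_iff_lt]
    simpa only [hk, zpow_natCast] using pow_apply_lt_pow_apply
      (fun z => (apply_lt_apply_iff_of_pow_mem_zpowers hT hn hH hF hTH x z).1 hFT) hn x
  exact ⟨k, ⟨k_nonneg, k_lt⟩, hk⟩

end LinearOrder

theorem orderIso_addRight_zpow_apply {A : Type*} [AddGroup A] [LE A] [AddRightMono A]
    (a x : A) (k : ℤ) : (OrderIso.addRight a ^ k) x = x + k • a := by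
  have inv_apply (y : A) : (OrderIso.addRight a)⁻¹ y = y + -a := rfl
  induction k using Int.induction_on generalizing x with
  | zero => simp
  | succ k ih =>
    rw [zpow_add_one, RelIso.mul_apply, ih, OrderIso.addRight_apply, add_assoc, add_comm (k : ℤ),
      one_add_zsmul]
  | pred k ih =>
    rw [zpow_sub_one, RelIso.mul_apply, ih, inv_apply, add_assoc, sub_eq_neg_add, add_zsmul,
      neg_one_zsmul]

section Lifts

variable {α X : Type*} [TopologicalSpace X]

theorem homeomorph_coe_pow (g : X ≃ₜ X) (n : ℕ) : ⇑(g ^ n) = g^[n] :=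
  hom_coe_pow _ rfl (fun _ _ => rfl) g n

theorem subsingleton_setOf_semiconj {p : α → X} (hp : Surjective p) (F : α → α) :
    {g : X ≃ₜ X | Semiconj p F g}.Subsingleton := fun _ hg _ hk =>
  Homeomorph.ext <| hp.forall.2 fun x => (hg x).symm.trans (hk x)

/-- The group of order automorphisms of `α` that lift an element of `G` along `p : α → X`. -/
def orderLiftGroup [LE α] (p : α → X) (G : Subgroup (X ≃ₜ X)) : Subgroup (α ≃o α) where
  carrier := {F | ∃ g ∈ G, Semiconj p F g}
  mul_mem' := by
    rintro F K ⟨g, hg, hF⟩ ⟨k, hk, hK⟩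
    exact ⟨g * k, G.mul_mem hg hk, hF.comp_right hK⟩
  one_mem' := ⟨1, G.one_mem, Semiconj.id_right⟩
  inv_mem' := by
    rintro F ⟨g, hg, hF⟩
    exact ⟨g⁻¹, G.inv_mem hg, hF.inverses_right F.apply_symm_apply g.symm_apply_apply⟩

end Lifts

section CircleLifts

variable {f : ℝ → ℝ} {g h : Circle ≃ₜ Circle} {F : ℝ ≃o ℝ}

theorem exists_eq_add_of_semiconj_exp_id (hf : Continuous f) (hlift : Semiconj Circle.exp f id) :
    ∃ k : ℤ, ∀ x, f x = x + k * (2 * π) := by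
  obtain ⟨k, hk⟩ := Circle.exp_eq_exp.1 (hlift 0)
  refine ⟨k, congrFun (Circle.isCoveringMap_exp.eq_of_comp_eq hf (by fun_prop) ?_ 0 hk)⟩
  exact funext fun x => (hlift x).trans (Circle.exp_eq_exp.2 ⟨k, rfl⟩).symm

theorem exists_continuous_semiconj_exp {g : Circle → Circle} (hg : Continuous g) :
    ∃ f : ℝ → ℝ, Continuous f ∧ Semiconj Circle.exp f g := by
  obtain ⟨y, hy⟩ := Circle.exp_surjective (g (Circle.exp 0))
  obtain ⟨f, ⟨-, hf⟩, -⟩ := Circle.isCoveringMap_exp.existsUnique_continuousMap_lifts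
    ⟨fun x => g (Circle.exp x), by fun_prop⟩ 0 y hy
  exact ⟨f, f.continuous, congrFun hf⟩

theorem exists_strictMono_or_strictAnti_semiconj_exp (g : Circle ≃ₜ Circle) :
    ∃ f : ℝ → ℝ, Surjective f ∧ (StrictMono f ∨ StrictAnti f) ∧ Semiconj Circle.exp f g := by
  obtain ⟨f, hf, hfg⟩ := exists_continuous_semiconj_exp g.continuous
  obtain ⟨f', hf', hfg'⟩ := exists_continuous_semiconj_exp g.symm.continuous
  obtain ⟨k, hk⟩ := exists_eq_add_of_semiconj_exp_id (hf'.comp hf)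
    (by simpa using hfg'.comp_right hfg)
  obtain ⟨l, hl⟩ := exists_eq_add_of_semiconj_exp_id (hf.comp hf')
    (by simpa using hfg.comp_right hfg')
  have f_surj : Surjective f := fun y =>
    ⟨f' (y - l * (2 * π)), (hl _).trans (sub_add_cancel _ _)⟩
  have f_inj : Injective f := fun x y hxy =>
    add_right_cancel ((hk x).symm.trans ((congrArg f' hxy).trans (hk y)))
  exact ⟨f, f_surj, hf.strictMono_of_inj f_inj, hfg⟩

/-- A homeomorphism of the circle preserves orientation if it has an increasing lift to `ℝ`. -/
def OrientationPreserving (g : Circle ≃ₜ Circle) : Prop :=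
  ∃ F : ℝ ≃o ℝ, Semiconj Circle.exp F g

theorem OrientationPreserving.of_strictMono (hf : StrictMono f) (hf' : Surjective f)
    (hfg : Semiconj Circle.exp f g) : OrientationPreserving g :=
  ⟨hf.orderIsoOfSurjective f hf', hfg⟩

theorem exists_strictAnti_of_not_orientationPreserving (hg : ¬ OrientationPreserving g) :
    ∃ f : ℝ → ℝ, Surjective f ∧ StrictAnti f ∧ Semiconj Circle.exp f g := by
  obtain ⟨f, hsurj, hmono | hanti, hfg⟩ := exists_strictMono_or_strictAnti_semiconj_exp g
  · exact absurd (.of_strictMono hmono hsurj hfg) hg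
  · exact ⟨f, hsurj, hanti, hfg⟩

theorem orientationPreserving_mul_of_not (hg : ¬ OrientationPreserving g)
    (hh : ¬ OrientationPreserving h) : OrientationPreserving (g * h) := by
  obtain ⟨f, hf_surj, hf_anti, hf⟩ := exists_strictAnti_of_not_orientationPreserving hg
  obtain ⟨f', hf'_surj, hf'_anti, hf'⟩ := exists_strictAnti_of_not_orientationPreserving hh
  exact .of_strictMono (hf_anti.comp hf'_anti) (hf_surj.comp hf'_surj) (hf.comp_right hf')

theorem mem_zpowers_addRight_of_semiconj_exp_id (hF : Semiconj Circle.exp F id) :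
    F ∈ Subgroup.zpowers (OrderIso.addRight (2 * π)) := by
  obtain ⟨k, hk⟩ := exists_eq_add_of_semiconj_exp_id F.continuous hF
  refine ⟨k, RelIso.ext fun x => ?_⟩
  rw [orderIso_addRight_zpow_apply, hk, zsmul_eq_mul]

theorem semiconj_exp_addRight_zpow_mul (hF : Semiconj Circle.exp F g) (k : ℤ) :
    Semiconj Circle.exp (OrderIso.addRight (2 * π) ^ k * F : ℝ ≃o ℝ) g := fun x => by
  rw [RelIso.mul_apply, orderIso_addRight_zpow_apply, ← hF x, zsmul_eq_mul]
  exact Circle.exp_eq_exp.2 ⟨k, rfl⟩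

theorem OrientationPreserving.exists_lift_apply_zero_mem_Ico (hg : OrientationPreserving g) :
    ∃ F : ℝ ≃o ℝ, Semiconj Circle.exp F g ∧ F 0 ∈ Ico 0 (2 * π) := by
  obtain ⟨F, hF⟩ := hg
  obtain ⟨k, hk, -⟩ := existsUnique_add_zsmul_mem_Ico two_pi_pos (F 0) 0
  exact ⟨_, semiconj_exp_addRight_zpow_mul hF k, by
    simpa only [RelIso.mul_apply, orderIso_addRight_zpow_apply, zero_add] using hk⟩

theorem finite_setOf_orientationPreserving {G : Subgroup (Circle ≃ₜ Circle)} {n : ℕ} (hn : n ≠ 0)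
    (hexp : ∀ g ∈ G, g ^ n = 1) : {g ∈ G | OrientationPreserving g}.Finite := by
  have pow_mem : ∀ F ∈ orderLiftGroup Circle.exp G,
      F ^ n ∈ Subgroup.zpowers (OrderIso.addRight (2 * π)) := by
    rintro F ⟨g, hg, hF⟩
    apply mem_zpowers_addRight_of_semiconj_exp_id
    have iterate_eq : g^[n] = id := by rw [← homeomorph_coe_pow, hexp g hg]; rfl
    simpa only [orderIso_coe_pow, iterate_eq] using hF.iterate_right n
  have addRight_mem : OrderIso.addRight (2 * π) ∈ orderLiftGroup Circle.exp G :=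
    ⟨1, G.one_mem, fun x => Circle.periodic_exp x⟩
  have lifts_finite := finite_setOf_apply_mem_Ico_of_pow_mem_zpowers
    (fun x => lt_add_of_pos_right x two_pi_pos) addRight_mem hn pow_mem 0
  refine (lifts_finite.biUnion fun F _ =>
    (subsingleton_setOf_semiconj Circle.exp_surjective F).finite).subset ?_
  rintro g ⟨hg, hg_pres⟩
  obtain ⟨F, hF, hF0⟩ := hg_pres.exists_lift_apply_zero_mem_Ico
  exact mem_biUnion ⟨⟨g, hg, hF⟩, by rwa [OrderIso.addRight_apply, zero_add]⟩ hF

end CircleLifts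

theorem circle_homeo_two_group_bounded_exponent_finite_general
    (G : Subgroup (Circle ≃ₜ Circle)) (n : ℕ) (hn : n ≠ 0) (hexp : ∀ g ∈ G, g ^ n = 1) :
    Finite G := by
  have pres_finite := finite_setOf_orientationPreserving hn hexp
  suffices (G : Set (Circle ≃ₜ Circle)).Finite from this.to_subtype
  by_cases hG : ∀ g ∈ G, OrientationPreserving g
  · exact pres_finite.subset fun g hg => ⟨hg, hG g hg⟩
  · push Not at hG
    obtain ⟨a, ha, ha_rev⟩ := hG
    refine (pres_finite.union (pres_finite.preimage (mul_right_injective a).injOn)).subset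
      fun g hg => ?_
    by_cases hg_pres : OrientationPreserving g
    · exact .inl ⟨hg, hg_pres⟩
    · exact .inr ⟨G.mul_mem ha hg, orientationPreserving_mul_of_not ha_rev hg_pres⟩

/-- A subgroup of the homeomorphism group of the circle in which every element `g`
satisfies `g ^ 2 ^ N = 1` for a fixed `N` is finite. -/
theorem circle_homeo_two_group_bounded_exponent_finite
    (G : Subgroup (Circle ≃ₜ Circle)) (N : ℕ)
    (hexp : ∀ g ∈ G, g ^ 2 ^ N = 1) :
    Finite G :=
  circle_homeo_two_group_bounded_exponent_finite_general G (2 ^ N) (by positivity) hexp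
end
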